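/- Let (A,G,α) be a C*-dynamical system with G discrete and let F : G → CB(A) be a bounded function. The following are equivalent: (i) F is a completely positive Herz-Schur (A,G,α)-multiplier; (ii) the function N(F) : G×G → CB(A), N(F)(s,t)(a) = α_{s⁻¹}(F(st⁻¹)(α_s(a))), is of positive type; (iii) N(F) is a Schur A-multiplier and S_{N(F)} is completely positive. Moreover, if (i) holds then ||S_F||_cb = ||S_{N(F)}||_cb = ||F(e)||_cb. -/

import Mathlib

noncomputable section

open scoped ComplexOrder
open Matrix
open scoped ENNReal

/-- Positivity of a matrix over a (possibly non-unital) C*-algebra: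
`M` is positive iff it factors as `Nᴴ * N`. -/
def MatPos {R : Type*} [NonUnitalSemiring R] [StarRing R] {ν : Type*} [Fintype ν]
    (M : Matrix ν ν R) : Prop :=
  ∃ N : Matrix ν ν R, M = Nᴴ * N

/-- A linear map between C*-algebras is completely positive if all its matrix
amplifications preserve positivity. -/
def IsCompletelyPositive {R S : Type*} [NonUnitalSemiring R] [StarRing R] [Module ℂ R]
    [NonUnitalSemiring S] [StarRing S] [Module ℂ S] (Φ : R →ₗ[ℂ] S) : Prop :=
  ∀ (n : ℕ) (M : Matrix (Fin n) (Fin n) R), MatPos M → MatPos (M.map Φ)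

variable {H : Type*} [NormedAddCommGroup H] [InnerProductSpace ℂ H] [CompleteSpace H]

/-- The bounded operator on the Hilbert space `H ⊕₂ ⋯ ⊕₂ H` associated to an
operator-valued `n × n` matrix. -/
def matOp {ν : Type*} [Fintype ν] (M : Matrix ν ν (H →L[ℂ] H)) :
    PiLp 2 (fun _ : ν => H) →L[ℂ] PiLp 2 (fun _ : ν => H) :=
  ((PiLp.continuousLinearEquiv 2 ℂ (fun _ : ν => H)).symm :
      (∀ _ : ν, H) →L[ℂ] PiLp 2 (fun _ : ν => H)) ∘L
    (ContinuousLinearMap.pi fun i =>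
      (∑ j, (M i j) ∘L (ContinuousLinearMap.proj j)) ∘L
        ((PiLp.continuousLinearEquiv 2 ℂ (fun _ : ν => H)) :
          PiLp 2 (fun _ : ν => H) →L[ℂ] ∀ _ : ν, H))

variable {H : Type*} [NormedAddCommGroup H] [InnerProductSpace ℂ H] [CompleteSpace H]
variable {X : Type*}

/-- Evaluation at a point, as a continuous linear map `ℓ²(X,H) → H`. -/
def lpEval (x : X) : lp (fun _ : X => H) 2 →L[ℂ] H :=
  LinearMap.mkContinuous
    { toFun := fun f => f x
      map_add' := fun f g => by
        have := lp.coeFn_add f g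
        exact congrFun this x
      map_smul' := fun c f => by
        have := lp.coeFn_smul c f
        exact congrFun this x }
    1 (fun f => by
      simpa using lp.norm_apply_le_norm (by norm_num) f x)

/-- Inclusion of the `x`-th coordinate, as a continuous linear map `H → ℓ²(X,H)`. -/
def lpSingle (x : X) : H →L[ℂ] lp (fun _ : X => H) 2 := by
  classical
  exact LinearMap.mkContinuous
    { toFun := fun ξ => lp.single 2 x ξ
      map_add' := fun ξ η => by
        apply lp.ext
        funext j
        by_cases h : j = x
        · subst h; simp [lp.single_apply_self]
        · simp [lp.single_apply_ne _ _ _ h, lp.coeFn_add]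
      map_smul' := fun c ξ => by simp [lp.single_smul] }
    1 (fun ξ => by
      simpa using (lp.norm_single (p := 2) (by norm_num)
        (fun _ : X => ξ) x).le)

/-- The elementary operator `e_{x,y} ⊗ T` on `ℓ²(X,H)`. -/
def elemOp (x y : X) (T : H →L[ℂ] H) :
    lp (fun _ : X => H) 2 →L[ℂ] lp (fun _ : X => H) 2 :=
  (lpSingle x) ∘L T ∘L (lpEval y)

/-- The operator `T_k` on `ℓ²(X,H)` associated with a finitely supported kernel
`k : X × X → B(H)`; it is (defined to be) `0` if `k` is not finitely supported. -/
def TOp (k : X × X → (H →L[ℂ] H)) :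
    lp (fun _ : X => H) 2 →L[ℂ] lp (fun _ : X => H) 2 :=
  ∑ᶠ (p : X × X), elemOp p.1 p.2 (k p)

variable {G : Type*} [Group G]

/-- The left regular translation `λ_t` on `ℓ²(G,H)`. -/
def lam (t : G) : lp (fun _ : G => H) 2 →L[ℂ] lp (fun _ : G => H) 2 :=
  LinearMap.mkContinuous
    { toFun := fun f =>
        ⟨fun s => f (t⁻¹ * s), by
          apply memℓp_gen
          have hf : Summable fun s => ‖f s‖ ^ (2 : ℝ≥0∞).toReal :=
            (lp.memℓp f).summable (by norm_num)
          exact ((Equiv.mulLeft t⁻¹).summable_iff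
            (f := fun s => ‖f s‖ ^ (2 : ℝ≥0∞).toReal)).2 hf⟩
      map_add' := fun f g => by
        apply lp.ext; funext s
        exact congrFun (lp.coeFn_add f g) (t⁻¹ * s)
      map_smul' := fun c f => by
        apply lp.ext; funext s
        exact congrFun (lp.coeFn_smul c f) (t⁻¹ * s) }
    1 (fun f => by
      rw [one_mul]
      refine lp.norm_le_of_tsum_le (by norm_num) (norm_nonneg f) ?_
      have h1 : ∑' (s : G), ‖f (t⁻¹ * s)‖ ^ (2 : ℝ≥0∞).toReal
          = ∑' (s : G), ‖f s‖ ^ (2 : ℝ≥0∞).toReal :=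
        (Equiv.mulLeft t⁻¹).tsum_eq (fun s => ‖f s‖ ^ (2 : ℝ≥0∞).toReal)
      show ∑' (s : G), ‖f (t⁻¹ * s)‖ ^ (2 : ℝ≥0∞).toReal ≤ ‖f‖ ^ (2 : ℝ≥0∞).toReal
      rw [h1, ← lp.norm_rpow_eq_tsum (by norm_num) f])

/-- The diagonal ("block multiplication") operator on `ℓ²(X,H)` associated with a
uniformly bounded family of operators. -/
def diagOp (T : X → (H →L[ℂ] H)) (C : ℝ) (hC : ∀ x, ‖T x‖ ≤ C) :
    lp (fun _ : X => H) 2 →L[ℂ] lp (fun _ : X => H) 2 := by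
  have hC' : ∀ x, ‖T x‖ ≤ max C 0 := fun x => (hC x).trans (le_max_left _ _)
  have hr : (0:ℝ) < (2 : ℝ≥0∞).toReal := by norm_num
  have key : ∀ (f : lp (fun _ : X => H) 2) (x : X),
      ‖T x (f x)‖ ^ (2 : ℝ≥0∞).toReal
        ≤ (max C 0) ^ (2 : ℝ≥0∞).toReal * ‖f x‖ ^ (2 : ℝ≥0∞).toReal := by
    intro f x
    have h1 : ‖T x (f x)‖ ≤ max C 0 * ‖f x‖ :=
      ((T x).le_opNorm (f x)).trans
        (mul_le_mul_of_nonneg_right (hC' x) (norm_nonneg _))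
    calc ‖T x (f x)‖ ^ (2 : ℝ≥0∞).toReal
        ≤ (max C 0 * ‖f x‖) ^ (2 : ℝ≥0∞).toReal :=
          Real.rpow_le_rpow (norm_nonneg _) h1 hr.le
      _ = (max C 0) ^ (2 : ℝ≥0∞).toReal * ‖f x‖ ^ (2 : ℝ≥0∞).toReal :=
          Real.mul_rpow (le_max_right _ _) (norm_nonneg _)
  have mem : ∀ f : lp (fun _ : X => H) 2, Memℓp (fun x => T x (f x)) 2 := by
    intro f
    apply memℓp_gen
    exact Summable.of_nonneg_of_le
      (fun x => Real.rpow_nonneg (norm_nonneg _) _) (key f)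
      (((lp.memℓp f).summable hr).mul_left _)
  exact LinearMap.mkContinuous
    { toFun := fun f => ⟨fun x => T x (f x), mem f⟩
      map_add' := fun f g => by
        apply lp.ext; funext x
        have := congrFun (lp.coeFn_add f g) x
        show T x ((f + g) x) = _
        rw [this]
        exact (T x).map_add (f x) (g x)
      map_smul' := fun c f => by
        apply lp.ext; funext x
        have := congrFun (lp.coeFn_smul c f) x
        show T x ((c • f) x) = _
        rw [this]
        simp [lp.coeFn_smul] }
    (max C 0) (fun f => by
      refine lp.norm_le_of_tsum_le hr (by positivity) ?_
      show ∑' (x : X), ‖T x (f x)‖ ^ (2 : ℝ≥0∞).toReal ≤ _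
      calc ∑' (x : X), ‖T x (f x)‖ ^ (2 : ℝ≥0∞).toReal
          ≤ ∑' (x : X), (max C 0) ^ (2 : ℝ≥0∞).toReal * ‖f x‖ ^ (2 : ℝ≥0∞).toReal :=
            Summable.tsum_le_tsum (key f)
              (Summable.of_nonneg_of_le
                (fun x => Real.rpow_nonneg (norm_nonneg _) _) (key f)
                (((lp.memℓp f).summable hr).mul_left _))
              (((lp.memℓp f).summable hr).mul_left _)
        _ = (max C 0) ^ (2 : ℝ≥0∞).toReal * ∑' (x : X), ‖f x‖ ^ (2 : ℝ≥0∞).toReal :=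
            tsum_mul_left
        _ = (max C 0) ^ (2 : ℝ≥0∞).toReal * ‖f‖ ^ (2 : ℝ≥0∞).toReal := by
            rw [lp.norm_rpow_eq_tsum hr]
        _ = (max C 0 * ‖f‖) ^ (2 : ℝ≥0∞).toReal :=
            (Real.mul_rpow (by positivity) (norm_nonneg _)).symm)

section CB

variable {A' B' : Type*} [AddCommMonoid A'] [Module ℂ A'] [AddCommMonoid B'] [Module ℂ B']
variable {K : Type*} [NormedAddCommGroup K] [InnerProductSpace ℂ K] [CompleteSpace K]

/-- All matrix amplifications of `Φ` are bounded by `C`, where matrices over the abstract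
spaces are normed through the given embeddings into concrete operator algebras. -/
def CBBound (ιA : A' → (H →L[ℂ] H)) (ιB : B' → (K →L[ℂ] K))
    (Φ : A' →ₗ[ℂ] B') (C : ℝ) : Prop :=
  ∀ (n : ℕ) (M : Matrix (Fin n) (Fin n) A'),
    ‖matOp (M.map (fun a => ιB (Φ a)))‖ ≤ C * ‖matOp (M.map ιA)‖

/-- Complete boundedness of a linear map, relative to embeddings of its domain and
codomain into concrete operator algebras. -/
def IsCB (ιA : A' → (H →L[ℂ] H)) (ιB : B' → (K →L[ℂ] K)) (Φ : A' →ₗ[ℂ] B') : Prop :=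
  ∃ C : ℝ, 0 ≤ C ∧ CBBound ιA ιB Φ C

/-- The completely bounded norm of a linear map, relative to embeddings of its domain
and codomain into concrete operator algebras. -/
def cbNorm (ιA : A' → (H →L[ℂ] H)) (ιB : B' → (K →L[ℂ] K)) (Φ : A' →ₗ[ℂ] B') : ℝ :=
  sInf { C : ℝ | 0 ≤ C ∧ CBBound ιA ιB Φ C }

end CB

section Schur

variable {A : Type*} [NonUnitalCStarAlgebra A]

/-- A *-representation is non-degenerate if the span of the vectors in its range is dense. -/
def NondegenerateRep {K : Type*} [NormedAddCommGroup K] [InnerProductSpace ℂ K]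
    [CompleteSpace K] (ρ : A →⋆ₙₐ[ℂ] (K →L[ℂ] K)) : Prop :=
  Dense (Submodule.span ℂ {ξ : K | ∃ (a : A) (v : K), ρ a v = ξ} : Set K)

/-- A function `φ : X × X → CB(A, B(H))` is of positive type if it maps positive
matrices to positive matrices, entrywise. -/
def PositiveType (φ : X → X → (A →ₗ[ℂ] (H →L[ℂ] H))) : Prop :=
  ∀ (m : ℕ) (x : Fin m → X) (a : Matrix (Fin m) (Fin m) A),
    MatPos a → MatPos (Matrix.of fun p q => φ (x p) (x q) (a p q))

/-- A kernel `k : X × X → A` is positive definite if all the matrices obtained by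
sampling it at finitely many points are positive. -/
def PosDefKernel (k : X × X → A) : Prop :=
  ∀ (n : ℕ) (x : Fin n → X), MatPos (Matrix.of fun i j => k (x i, x j))

/-- The operator `T_k` on `ℓ²(X,H)` of a kernel `k : X × X → A`, via the embedding
`ι : A → B(H)` (it is `0` unless `k` is finitely supported). -/
def TKer (ι : A →⋆ₙₐ[ℂ] (H →L[ℂ] H)) (k : X × X → A) :
    lp (fun _ : X => H) 2 →L[ℂ] lp (fun _ : X => H) 2 :=
  TOp (fun p => ι (k p))

/-- `C` is a complete bound for the Schur multiplication map `S_φ : T_k ↦ T_{φ·k}`,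
tested on (matrices of) finitely supported kernels, which span a dense subspace of
`K(ℓ²(X)) ⊗ A`. -/
def SchurBound (ι : A →⋆ₙₐ[ℂ] (H →L[ℂ] H)) (φ : X → X → (A →ₗ[ℂ] (H →L[ℂ] H)))
    (C : ℝ) : Prop :=
  ∀ (n : ℕ) (k : Fin n → Fin n → (X × X → A)),
    (∀ i j, (Function.support (k i j)).Finite) →
    ‖matOp (Matrix.of fun i j => TOp (fun p => φ p.1 p.2 (k i j p)))‖
      ≤ C * ‖matOp (Matrix.of fun i j => TKer ι (k i j))‖

/-- `φ` is a Schur `A`-multiplier: the map `S_φ : T_k ↦ T_{φ·k}` is completely bounded. -/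
def IsSchurMultiplier (ι : A →⋆ₙₐ[ℂ] (H →L[ℂ] H))
    (φ : X → X → (A →ₗ[ℂ] (H →L[ℂ] H))) : Prop :=
  ∃ C : ℝ, 0 ≤ C ∧ SchurBound ι φ C

/-- The multiplier norm `‖φ‖_m = ‖S_φ‖_cb` of a Schur `A`-multiplier. -/
def schurNorm (ι : A →⋆ₙₐ[ℂ] (H →L[ℂ] H))
    (φ : X → X → (A →ₗ[ℂ] (H →L[ℂ] H))) : ℝ :=
  sInf { C : ℝ | 0 ≤ C ∧ SchurBound ι φ C }

/-- Complete positivity of the map `S_φ : K(ℓ²(X)) ⊗ A → K(ℓ²(X)) ⊗ B(H)`, tested on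
(matrices of) finitely supported kernels. -/
def SchurCP (ι : A →⋆ₙₐ[ℂ] (H →L[ℂ] H)) (φ : X → X → (A →ₗ[ℂ] (H →L[ℂ] H))) : Prop :=
  ∀ (n : ℕ) (k : Fin n → Fin n → (X × X → A)),
    (∀ i j, (Function.support (k i j)).Finite) →
    MatPos (Matrix.of fun i j => TKer ι (k i j)) →
    MatPos (Matrix.of fun i j => TOp (fun p => φ p.1 p.2 (k i j p)))

end Schur

section Dynamics

variable {A : Type*} [NonUnitalCStarAlgebra A]

/-- `α` is an action of the group `G` on `A` by *-automorphisms. -/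
def IsAction (α : G → A ≃⋆ₐ[ℂ] A) : Prop :=
  (∀ a, α 1 a = a) ∧ ∀ s t : G, ∀ a : A, α (s * t) a = α s (α t a)

/-- A *-automorphism of `A`, as a `ℂ`-linear map. -/
def autLin (e : A ≃⋆ₐ[ℂ] A) : A →ₗ[ℂ] A :=
  { toFun := e
    map_add' := fun a b => map_add e a b
    map_smul' := fun c a => map_smul e c a }

/-- The representation `π` of `A` on `ℓ²(G,H)`: `(π(a)ξ)(s) = α_{s⁻¹}(a)(ξ(s))`. -/
def piRep (ι : A →⋆ₙₐ[ℂ] (H →L[ℂ] H)) (α : G → A ≃⋆ₐ[ℂ] A) (a : A) :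
    lp (fun _ : G => H) 2 →L[ℂ] lp (fun _ : G => H) 2 :=
  diagOp (fun s => ι (α s⁻¹ a)) ‖a‖ (fun s =>
    (NonUnitalStarAlgHom.norm_apply_le ι (α s⁻¹ a)).trans_eq
      (StarAlgEquiv.norm_map (α s⁻¹) a))

/-- The reduced crossed product `A ⋊_{α,r} G`, realised concretely on `ℓ²(G,H)` as the
norm closure of the linear span of the operators `π(a)λ_t`. -/
def CrossedSet (ι : A →⋆ₙₐ[ℂ] (H →L[ℂ] H)) (α : G → A ≃⋆ₐ[ℂ] A) :
    Set (lp (fun _ : G => H) 2 →L[ℂ] lp (fun _ : G => H) 2) :=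
  closure (Submodule.span ℂ
    {x | ∃ (a : A) (t : G), x = piRep ι α a * lam t} : Set _)

/-- `E` is the canonical conditional expectation of the reduced crossed product onto `A`:
it is characterised by `ι (E x) = (x)_{e,e}`, the `(e,e)` matrix entry of `x`. -/
def IsCondExp (ι : A →⋆ₙₐ[ℂ] (H →L[ℂ] H)) (α : G → A ≃⋆ₐ[ℂ] A)
    (E : (lp (fun _ : G => H) 2 →L[ℂ] lp (fun _ : G => H) 2) →ₗ[ℂ] A) : Prop :=
  ∀ x ∈ CrossedSet ι α, ι (E x) = (lpEval (1 : G)) ∘L x ∘L (lpSingle (1 : G))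

/-- The defining property of the map `S_F` associated with `F : G → CB(A)`:
`S_F(π(a)λ_s) = π(F(s)(a))λ_s`. -/
def HSGenProp (ι : A →⋆ₙₐ[ℂ] (H →L[ℂ] H)) (α : G → A ≃⋆ₐ[ℂ] A)
    (F : G → (A →ₗ[ℂ] A))
    (Φ : (lp (fun _ : G => H) 2 →L[ℂ] lp (fun _ : G => H) 2) →ₗ[ℂ]
         (lp (fun _ : G => H) 2 →L[ℂ] lp (fun _ : G => H) 2)) : Prop :=
  ∀ (a : A) (s : G), Φ (piRep ι α a * lam s) = piRep ι α (F s a) * lam s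

/-- `Φ` maps the reduced crossed product into itself and, on matrices over the reduced
crossed product, all amplifications of `Φ` are bounded by `C`. -/
def CBBoundOnCrossed (ι : A →⋆ₙₐ[ℂ] (H →L[ℂ] H)) (α : G → A ≃⋆ₐ[ℂ] A)
    (Φ : (lp (fun _ : G => H) 2 →L[ℂ] lp (fun _ : G => H) 2) →ₗ[ℂ]
         (lp (fun _ : G => H) 2 →L[ℂ] lp (fun _ : G => H) 2)) (C : ℝ) : Prop :=
  ∀ (n : ℕ) (M : Matrix (Fin n) (Fin n)
      (lp (fun _ : G => H) 2 →L[ℂ] lp (fun _ : G => H) 2)),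
    (∀ i j, M i j ∈ CrossedSet ι α) →
      ‖matOp (M.map Φ)‖ ≤ C * ‖matOp M‖

/-- `Φ` is completely positive on the reduced crossed product: matrices over the crossed
product which are positive are mapped to positive matrices. -/
def CPOnCrossed (ι : A →⋆ₙₐ[ℂ] (H →L[ℂ] H)) (α : G → A ≃⋆ₐ[ℂ] A)
    (Φ : (lp (fun _ : G => H) 2 →L[ℂ] lp (fun _ : G => H) 2) →ₗ[ℂ]
         (lp (fun _ : G => H) 2 →L[ℂ] lp (fun _ : G => H) 2)) : Prop :=
  (∀ x ∈ CrossedSet ι α, Φ x ∈ CrossedSet ι α) ∧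
  ∀ (n : ℕ) (M : Matrix (Fin n) (Fin n)
      (lp (fun _ : G => H) 2 →L[ℂ] lp (fun _ : G => H) 2)),
    (∀ i j, M i j ∈ CrossedSet ι α) → MatPos M → MatPos (M.map Φ)

/-- `F : G → CB(A)` is a Herz-Schur `(A,G,α)`-multiplier: the map `S_F` determined by
`S_F(π(a)λ_s) = π(F(s)(a))λ_s` extends to a completely bounded map on `A ⋊_{α,r} G`. -/
def IsHerzSchurMultiplier (ι : A →⋆ₙₐ[ℂ] (H →L[ℂ] H)) (α : G → A ≃⋆ₐ[ℂ] A)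
    (F : G → (A →ₗ[ℂ] A)) : Prop :=
  ∃ Φ, HSGenProp ι α F Φ ∧ (∀ x ∈ CrossedSet ι α, Φ x ∈ CrossedSet ι α) ∧
    ∃ C : ℝ, 0 ≤ C ∧ CBBoundOnCrossed ι α Φ C

/-- `F : G → CB(A)` is a completely positive Herz-Schur `(A,G,α)`-multiplier: the map
`S_F` extends to a completely positive (hence completely bounded) map on `A ⋊_{α,r} G`. -/
def IsHerzSchurMultiplierCP (ι : A →⋆ₙₐ[ℂ] (H →L[ℂ] H)) (α : G → A ≃⋆ₐ[ℂ] A)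
    (F : G → (A →ₗ[ℂ] A)) : Prop :=
  ∃ Φ, HSGenProp ι α F Φ ∧ CPOnCrossed ι α Φ ∧
    ∃ C : ℝ, 0 ≤ C ∧ CBBoundOnCrossed ι α Φ C

/-- The function `N(F) : G × G → CB(A)`, `N(F)(s,t)(a) = α_{s⁻¹}(F(st⁻¹)(α_s(a)))`. -/
def NF (α : G → A ≃⋆ₐ[ℂ] A) (F : G → (A →ₗ[ℂ] A)) : G → G → (A →ₗ[ℂ] A) :=
  fun s t => (autLin (α s⁻¹)) ∘ₗ (F (s * t⁻¹)) ∘ₗ (autLin (α s))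

end Dynamics

section Trace

variable {A : Type*} [NonUnitalCStarAlgebra A]

/-- `τ` is a positive linear functional. -/
def IsPositiveFunctional (τ : A →ₗ[ℂ] ℂ) : Prop :=
  ∀ a : A, 0 ≤ τ (star a * a)

/-- `τ` is tracial. -/
def IsTracial (τ : A →ₗ[ℂ] ℂ) : Prop :=
  ∀ a b : A, τ (a * b) = τ (b * a)

/-- `τ` is faithful. -/
def IsFaithfulFunctional (τ : A →ₗ[ℂ] ℂ) : Prop :=
  ∀ a : A, τ (star a * a) = 0 → a = 0

/-- The `L²`-norm `‖a‖_{2,τ} = τ(a*a)^{1/2}` associated with a positive functional `τ`. -/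
def l2norm (τ : A →ₗ[ℂ] ℂ) (a : A) : ℝ :=
  Real.sqrt (τ (star a * a)).re

/-- A map `Φ : A → A` is `L²`-bounded by `C` with respect to `τ`. -/
def L2BoundedBy (τ : A →ₗ[ℂ] ℂ) (Φ : A →ₗ[ℂ] A) (C : ℝ) : Prop :=
  ∀ a : A, l2norm τ (Φ a) ≤ C * l2norm τ a

/-- A map `Φ : A → A` is `L²`-bounded with respect to `τ`, i.e. it extends to a bounded
operator `T_Φ` on `L²(A,τ)`. -/
def L2Bounded (τ : A →ₗ[ℂ] ℂ) (Φ : A →ₗ[ℂ] A) : Prop :=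
  ∃ C : ℝ, 0 ≤ C ∧ L2BoundedBy τ Φ C

/-- The norm of the extension `T_Φ` of `Φ` to `L²(A,τ)`. -/
def l2OpNorm (τ : A →ₗ[ℂ] ℂ) (Φ : A →ₗ[ℂ] A) : ℝ :=
  sInf { C : ℝ | 0 ≤ C ∧ L2BoundedBy τ Φ C }

/-- `Φ` is `L²`-compact with respect to `τ`: the image under `Φ` of the `L²`-unit ball of
`A` is totally bounded in the `L²`-norm; equivalently, the extension `T_Φ` of `Φ` to
`L²(A,τ)` is a compact operator. -/
def L2Compact (τ : A →ₗ[ℂ] ℂ) (Φ : A →ₗ[ℂ] A) : Prop :=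
  ∀ ε : ℝ, 0 < ε → ∃ S : Finset A, ∀ a : A, l2norm τ a ≤ 1 →
    ∃ b ∈ S, l2norm τ (Φ a - b) < ε

end Trace

section Props

variable {A : Type*} [CStarAlgebra A]

/-- The pair `(A,τ)` has the C*-algebra Haagerup property (Definition 3.1, Dong). -/
def CStarHaagerup (τ : A →ₗ[ℂ] ℂ) : Prop :=
  ∃ (I : Type) (_ : Nonempty I) (_ : SemilatticeSup I) (Φ : I → (A →ₗ[ℂ] A)),
    (∀ i, Φ i 1 = 1) ∧
    (∀ i, IsCompletelyPositive (Φ i)) ∧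
    (∀ i (a : A), τ (Φ i (star a * a)) ≤ τ (star a * a)) ∧
    (∀ i, L2Compact τ (Φ i)) ∧
    (∀ a : A, Filter.Tendsto (fun i => l2norm τ (Φ i a - a)) Filter.atTop (nhds 0))

/-- `A` is a nuclear C*-algebra: there is a net of finite-rank completely positive
contractions converging to the identity in the point-norm topology. -/
def NuclearCStarAlgebra (A : Type*) [NonUnitalCStarAlgebra A] : Prop :=
  ∃ (I : Type) (_ : Nonempty I) (_ : SemilatticeSup I) (Φ : I → (A →ₗ[ℂ] A)),
    (∀ i, IsCompletelyPositive (Φ i)) ∧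
    (∀ i (a : A), ‖Φ i a‖ ≤ ‖a‖) ∧
    (∀ i, FiniteDimensional ℂ (LinearMap.range (Φ i))) ∧
    (∀ a : A, Filter.Tendsto (fun i => ‖Φ i a - a‖) Filter.atTop (nhds 0))

/-- A discrete group `G` has the Haagerup property: there is a net of normalised
positive-definite functions on `G`, vanishing at infinity, converging pointwise to `1`. -/
def GroupHaagerup (G : Type*) [Group G] : Prop :=
  ∃ (I : Type) (_ : Nonempty I) (_ : SemilatticeSup I) (φ : I → G → ℂ),
    (∀ i, φ i 1 = 1) ∧
    (∀ i (n : ℕ) (s : Fin n → G) (μ : Fin n → ℂ),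
      0 ≤ ∑ k, ∑ l, (starRingEnd ℂ) (μ k) * φ i ((s k)⁻¹ * s l) * μ l) ∧
    (∀ i, ∀ ε : ℝ, 0 < ε → ∃ S : Finset G, ∀ s ∉ S, ‖φ i s‖ ≤ ε) ∧
    (∀ s : G, Filter.Tendsto (fun i => φ i s) Filter.atTop (nhds 1))

end Props

section More

variable {A : Type*} [NonUnitalCStarAlgebra A]

/-- A star homomorphism, as a `ℂ`-linear map. -/
def iotaLin {B : Type*} [NonUnitalCStarAlgebra B] (ι : A →⋆ₙₐ[ℂ] B) : A →ₗ[ℂ] B :=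
  { toFun := ι
    map_add' := fun a b => map_add ι a b
    map_smul' := fun c a => map_smul ι c a }

/-- A function `φ : X × X → CB(A)` with values in the maps on `A` is of positive type. -/
def PositiveTypeA (φ : X → X → (A →ₗ[ℂ] A)) : Prop :=
  ∀ (m : ℕ) (x : Fin m → X) (a : Matrix (Fin m) (Fin m) A),
    MatPos a → MatPos (Matrix.of fun p q => φ (x p) (x q) (a p q))

/-- The representation `π` of `A` on `ℓ²(G,H)`, as a linear map. -/
def piRepLin (ι : A →⋆ₙₐ[ℂ] (H →L[ℂ] H)) (α : G → A ≃⋆ₐ[ℂ] A) :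
    A →ₗ[ℂ] (lp (fun _ : G => H) 2 →L[ℂ] lp (fun _ : G => H) 2) :=
  { toFun := piRep ι α
    map_add' := fun a b => by
      apply ContinuousLinearMap.ext; intro f
      apply lp.ext; funext s
      have h1 : (((piRep ι α a + piRep ι α b) f :
          lp (fun _ : G => H) 2) : ∀ _ : G, H) s
          = ((piRep ι α a f : ∀ _ : G, H) s) + ((piRep ι α b f : ∀ _ : G, H) s) := by
        rw [ContinuousLinearMap.add_apply]
        exact congrFun (lp.coeFn_add (piRep ι α a f) (piRep ι α b f)) s
      show ι (α s⁻¹ (a + b)) (f s) = _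
      rw [h1]
      show _ = ι (α s⁻¹ a) (f s) + ι (α s⁻¹ b) (f s)
      rw [map_add (α s⁻¹), map_add ι, ContinuousLinearMap.add_apply]
    map_smul' := fun c a => by
      apply ContinuousLinearMap.ext; intro f
      apply lp.ext; funext s
      have h1 : (((c • piRep ι α a) f :
          lp (fun _ : G => H) 2) : ∀ _ : G, H) s
          = c • ((piRep ι α a f : ∀ _ : G, H) s) := by
        rw [ContinuousLinearMap.smul_apply]
        exact congrFun (lp.coeFn_smul c (piRep ι α a f)) s
      show ι (α s⁻¹ (c • a)) (f s) = _
      rw [RingHom.id_apply, h1]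
      show _ = c • ι (α s⁻¹ a) (f s)
      rw [map_smul (α s⁻¹), map_smul ι, ContinuousLinearMap.smul_apply] }

/-- The completely bounded norm of a map defined on the reduced crossed product. -/
def cbNormOnCrossed (ι : A →⋆ₙₐ[ℂ] (H →L[ℂ] H)) (α : G → A ≃⋆ₐ[ℂ] A)
    (Φ : (lp (fun _ : G => H) 2 →L[ℂ] lp (fun _ : G => H) 2) →ₗ[ℂ]
         (lp (fun _ : G => H) 2 →L[ℂ] lp (fun _ : G => H) 2)) : ℝ :=
  sInf { C : ℝ | 0 ≤ C ∧ CBBoundOnCrossed ι α Φ C }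

/-- The `L²`-norm `‖x‖_{2,τ'}` on the reduced crossed product induced by the trace
`τ' = τ ∘ E`. -/
def l2normCr (τ : A →ₗ[ℂ] ℂ)
    (E : (lp (fun _ : G => H) 2 →L[ℂ] lp (fun _ : G => H) 2) →ₗ[ℂ] A)
    (x : lp (fun _ : G => H) 2 →L[ℂ] lp (fun _ : G => H) 2) : ℝ :=
  Real.sqrt (τ (E (star x * x))).re

/-- The map `h_Φ : G → CB(A)` associated with a map `Φ` on the reduced crossed product:
`h_Φ(s)(a) = E(Φ(π(a)λ_s)λ_s*)`. -/
def hMap (ι : A →⋆ₙₐ[ℂ] (H →L[ℂ] H)) (α : G → A ≃⋆ₐ[ℂ] A)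
    (E : (lp (fun _ : G => H) 2 →L[ℂ] lp (fun _ : G => H) 2) →ₗ[ℂ] A)
    (Φ : (lp (fun _ : G => H) 2 →L[ℂ] lp (fun _ : G => H) 2) →ₗ[ℂ]
         (lp (fun _ : G => H) 2 →L[ℂ] lp (fun _ : G => H) 2))
    (s : G) : A →ₗ[ℂ] A :=
  E ∘ₗ (LinearMap.mulRight ℂ (star (lam s))) ∘ₗ Φ ∘ₗ
    (LinearMap.mulRight ℂ (lam (H := H) s)) ∘ₗ piRepLin ι α

end More

section BigProps

open Filter

variable {A : Type*} [CStarAlgebra A]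

/-- The Haagerup property for the `C*`-dynamical system `(A,G,α,τ)` (Definition 3.3). -/
def DynHaagerup (ι : A →⋆ₙₐ[ℂ] (H →L[ℂ] H)) (α : G → A ≃⋆ₐ[ℂ] A)
    (τ : A →ₗ[ℂ] ℂ) : Prop :=
  ∃ (I : Type) (_ : Nonempty I) (_ : SemilatticeSup I) (F : I → G → (A →ₗ[ℂ] A)),
    (∀ i, IsHerzSchurMultiplierCP ι α (F i)) ∧
    (∀ i, F i 1 1 = 1) ∧
    (∀ i (a : A), τ (F i 1 (star a * a)) ≤ τ (star a * a)) ∧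
    (∀ i (t : G), L2Compact τ (F i t)) ∧
    (∀ i, ∀ ε : ℝ, 0 < ε → ∃ S : Finset G, ∀ s ∉ S, l2OpNorm τ (F i s) ≤ ε) ∧
    (∀ (t : G) (a : A),
      Tendsto (fun i => l2norm τ (F i t a - a)) atTop (nhds 0))

/-- The C*-algebra Haagerup property for the reduced crossed product `A ⋊_{α,r} G`
endowed with the induced trace `τ' = τ ∘ E` (Definition 3.1). -/
def CrossedCStarHaagerup (ι : A →⋆ₙₐ[ℂ] (H →L[ℂ] H)) (α : G → A ≃⋆ₐ[ℂ] A)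
    (τ : A →ₗ[ℂ] ℂ)
    (E : (lp (fun _ : G => H) 2 →L[ℂ] lp (fun _ : G => H) 2) →ₗ[ℂ] A) : Prop :=
  ∃ (I : Type) (_ : Nonempty I) (_ : SemilatticeSup I)
    (Φ : I → ((lp (fun _ : G => H) 2 →L[ℂ] lp (fun _ : G => H) 2) →ₗ[ℂ]
              (lp (fun _ : G => H) 2 →L[ℂ] lp (fun _ : G => H) 2))),
    (∀ i, Φ i 1 = 1) ∧
    (∀ i, CPOnCrossed ι α (Φ i)) ∧
    (∀ i, ∀ x ∈ CrossedSet ι α, τ (E (Φ i (star x * x))) ≤ τ (E (star x * x))) ∧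
    (∀ i, ∀ ε : ℝ, 0 < ε →
      ∃ S : Finset (lp (fun _ : G => H) 2 →L[ℂ] lp (fun _ : G => H) 2),
        ∀ x ∈ CrossedSet ι α, l2normCr τ E x ≤ 1 →
          ∃ b ∈ S, l2normCr τ E (Φ i x - b) < ε) ∧
    (∀ x ∈ CrossedSet ι α,
      Tendsto (fun i => l2normCr τ E (Φ i x - x)) atTop (nhds 0))

end BigProps

section Nuc

open Filter

variable {A : Type*} [NonUnitalCStarAlgebra A]

/-- Nuclearity of the reduced crossed product `A ⋊_{α,r} G`: there is a net of
finite-rank completely positive contractions on it converging to the identity in the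
point-norm topology. -/
def CrossedNuclear (ι : A →⋆ₙₐ[ℂ] (H →L[ℂ] H)) (α : G → A ≃⋆ₐ[ℂ] A) : Prop :=
  ∃ (I : Type) (_ : Nonempty I) (_ : SemilatticeSup I)
    (Φ : I → ((lp (fun _ : G => H) 2 →L[ℂ] lp (fun _ : G => H) 2) →ₗ[ℂ]
              (lp (fun _ : G => H) 2 →L[ℂ] lp (fun _ : G => H) 2))),
    (∀ i, CPOnCrossed ι α (Φ i)) ∧
    (∀ i, ∀ x ∈ CrossedSet ι α, ‖Φ i x‖ ≤ ‖x‖) ∧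
    (∀ i, FiniteDimensional ℂ
      (Submodule.span ℂ ((fun x => Φ i x) '' CrossedSet ι α))) ∧
    (∀ x ∈ CrossedSet ι α, Tendsto (fun i => ‖Φ i x - x‖) atTop (nhds 0))

/-- Nuclearity of the `C*`-dynamical system `(A,G,α)` (Definition 4.2): a net of
completely positive, finitely supported Herz-Schur multipliers, with `‖F_i(e)‖_cb ≤ 1`,
with finite-rank values, converging to the identity pointwise in norm. -/
def DynNuclear (ι : A →⋆ₙₐ[ℂ] (H →L[ℂ] H)) (α : G → A ≃⋆ₐ[ℂ] A) : Prop :=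
  ∃ (I : Type) (_ : Nonempty I) (_ : SemilatticeSup I) (F : I → G → (A →ₗ[ℂ] A)),
    (∀ i, IsHerzSchurMultiplierCP ι α (F i)) ∧
    (∀ i, (Function.support (F i)).Finite) ∧
    (∀ i, CBBound (fun a => ι a) (fun a => ι a) (F i 1) 1) ∧
    (∀ i (s : G), FiniteDimensional ℂ (LinearMap.range (F i s))) ∧
    (∀ (s : G) (a : A), Tendsto (fun i => ‖F i s a - a‖) atTop (nhds 0))

end Nuc

section Amen

open Filter

variable {A : Type*} [CStarAlgebra A]

/-- Amenability of the action `α` of a discrete group `G` on a unital C*-algebra `A`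
(Definition 4.5): a net of finitely supported functions `T_i : G → Z(A)⁺` with
`Σ_s T_i(s)² = 1` and `‖Σ_s (T_i(s) - α_t(T_i(t⁻¹s)))*(T_i(s) - α_t(T_i(t⁻¹s)))‖ → 0`. -/
def AmenableAction {G : Type*} [Group G] (α : G → A ≃⋆ₐ[ℂ] A) : Prop :=
  ∃ (I : Type) (_ : Nonempty I) (_ : SemilatticeSup I) (T : I → G → A),
    (∀ i, (Function.support (T i)).Finite) ∧
    (∀ i (s : G) (c : A), Commute (T i s) c) ∧
    (∀ i (s : G), ∃ b : A, T i s = star b * b) ∧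
    (∀ i, ∑ᶠ s : G, T i s * T i s = 1) ∧
    (∀ t : G, Tendsto (fun i =>
        ‖∑ᶠ s : G, star (T i s - α t (T i (t⁻¹ * s))) *
          (T i s - α t (T i (t⁻¹ * s)))‖) atTop (nhds 0))

end Amen

universe u v w

/-- Data for a Stinespring-type representation of an operator-valued function on
`X × X`: a Hilbert space `K`, a *-representation `ρ : A → B(K)` and
families of operators `V, W : X → B(H,K)`. -/
structure OpValuedRep (A : Type u) [NonUnitalCStarAlgebra A]
    (H : Type v) [NormedAddCommGroup H] [InnerProductSpace ℂ H] [CompleteSpace H]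
    (X : Type w) where
  /-- the Hilbert space of the representation -/
  K : Type (max u v w)
  [nacg : NormedAddCommGroup K]
  [ips : InnerProductSpace ℂ K]
  [cpl : CompleteSpace K]
  /-- the representation -/
  ρ : A →⋆ₙₐ[ℂ] (K →L[ℂ] K)
  /-- the left family of operators -/
  V : X → (H →L[ℂ] K)
  /-- the right family of operators -/
  W : X → (H →L[ℂ] K)

attribute [instance] OpValuedRep.nacg OpValuedRep.ips OpValuedRep.cpl

end
noncomputable section
open scoped ComplexOrder ENNReal
open Matrix

/-!
Call `y` the Schur image of an operator `x` on `ℓ²(X,H)` under a kernel `φ` if `x` has entries in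
`A` and `y` has the entries of `x` transformed by `φ`. If `φ` is of positive type, compressing to
finitely many coordinates shows that `x ↦ y` preserves matrix positivity. It also bounds norms by
the diagonal of `φ`: for a matrix `a` over `A` with norm `c` and `f` running through an approximate
unit, the block matrix with diagonal blocks `c f*f` and off-diagonal blocks `f*af`, `(f*af)*` is
positive, hence so is its image, whose off-diagonal block is controlled by `φ s s (c f*f)`. The
approximate unit replaces the scalar blocks `c · 1`, because `A` need not be unital.

The entries of `π(F(t)(a))λ_t` are those of `π(a)λ_t` transformed by `N(F)`, so positive type of
`N(F)` makes `S_F` and `S_{N(F)}` completely positive, with cb-norm at most that of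
`N(F)(s, s) = α_{s⁻¹} ∘ F(e) ∘ α_s`. Conversely, a positive matrix `a` over `A` is spread over the
points `x_p` by elementary operators, respectively by `π(α_{x_p}(a_{p,q}))λ_{x_p x_q⁻¹}`, which is
`π(a)` conjugated by `diag(λ_{x_p})`; reading off the `(x_p, x_q)` entries of the image gives
positive type, and at `x_p = e` this bounds the cb-norm of `F(e)`.
-/

section

open scoped InnerProductSpace
open Filter Topology

local notation "𝓑(" E ")" => E →L[ℂ] E
local notation "ℓ²(" X "," E ")" => lp (fun _ : X => E) 2

section StarAlgebras

variable {C D : Type*} [NonUnitalCStarAlgebra C] [NonUnitalCStarAlgebra D]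

theorem exists_eq_star_mul_self_of_map (φ : C →⋆ₙₐ[ℂ] D) (hφ : Function.Injective φ) {x : C}
    (hx : ∃ d, φ x = star d * d) : ∃ c, x = star c * c := by
  let := CStarAlgebra.spectralOrder C
  let := CStarAlgebra.spectralOrder D
  have := CStarAlgebra.spectralOrderedRing C
  have := CStarAlgebra.spectralOrderedRing D
  have hφx : 0 ≤ φ x := CStarAlgebra.nonneg_iff_eq_star_mul_self.2 hx
  have hsa : IsSelfAdjoint x := hφ ((map_star φ x).trans (IsSelfAdjoint.of_nonneg hφx))
  have hneg : φ x⁻ = (φ x)⁻ := by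
    rw [CFC.negPart_def, CFC.negPart_def]
    exact NonUnitalStarAlgHomClass.map_cfcₙ (R := ℝ) (S := ℂ) φ _ _ (by fun_prop) (by simp)
      (NonUnitalStarAlgHom.isometry φ hφ).continuous hsa (hsa.map _)
  have hx_neg : x⁻ = 0 := hφ (by rw [hneg, map_zero, CFC.negPart_eq_zero_iff _ |>.2 hφx])
  exact CStarAlgebra.nonneg_iff_eq_star_mul_self.1 ((CFC.negPart_eq_zero_iff x).1 hx_neg)

theorem exists_bound_of_map_star_mul_self (Φ : C →ₗ[ℂ] D)
    (hΦ : ∀ c, ∃ d, Φ (star c * c) = star d * d) : ∃ K : ℝ, 0 ≤ K ∧ ∀ c, ‖Φ c‖ ≤ K * ‖c‖ := by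
  let := CStarAlgebra.spectralOrder C
  let := CStarAlgebra.spectralOrder D
  have := CStarAlgebra.spectralOrderedRing C
  have := CStarAlgebra.spectralOrderedRing D
  have hpos : ∀ c, 0 ≤ c → 0 ≤ Φ c := by
    intro c hc
    obtain ⟨b, rfl⟩ := CStarAlgebra.nonneg_iff_eq_star_mul_self.1 hc
    exact CStarAlgebra.nonneg_iff_eq_star_mul_self.2 (hΦ b)
  obtain ⟨K, hK⟩ := (PositiveLinearMap.mk₀ Φ hpos).exists_norm_apply_le
  exact ⟨K, K.2, hK⟩

end StarAlgebras

section OperatorMatrices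

variable {H : Type*} [NormedAddCommGroup H] [InnerProductSpace ℂ H]
variable {K : Type*} [NormedAddCommGroup K] [InnerProductSpace ℂ K]
variable {ν μ : Type*} [Fintype ν] [Fintype μ]

/-- The sesquilinear form `⟨ξ, M η⟩` of an operator matrix `M`, on families of vectors rather than
on `PiLp 2`, so that vectors can be reindexed and transformed coordinatewise. -/
def matForm (M : Matrix ν ν 𝓑(H)) (ξ η : ν → H) : ℂ :=
  ∑ i, ∑ j, ⟪ξ i, M i j (η j)⟫_ℂ

theorem matForm_diagonal [DecidableEq ν] (d : ν → 𝓑(H)) (ξ η : ν → H) :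
    matForm (Matrix.diagonal d) ξ η = ∑ p, ⟪ξ p, d p (η p)⟫_ℂ := by
  refine Finset.sum_congr rfl fun p _ => ?_
  rw [Finset.sum_eq_single p (fun q _ hq => by simp [Matrix.diagonal_apply_ne' _ hq]) (by simp),
    Matrix.diagonal_apply_eq]

theorem matForm_fromBlocks (P Q R S : Matrix ν ν 𝓑(H)) (ξ η : ν → H) :
    matForm (Matrix.fromBlocks P Q R S) (Sum.elim ξ η) (Sum.elim ξ η) =
      matForm P ξ ξ + matForm Q ξ η + matForm R η ξ + matForm S η η := by
  simp only [matForm, Fintype.sum_sum_type, Finset.sum_add_distrib, fromBlocks_apply₁₁,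
    fromBlocks_apply₁₂, fromBlocks_apply₂₁, fromBlocks_apply₂₂, Sum.elim_inl, Sum.elim_inr]
  ring

theorem matForm_conjTranspose [CompleteSpace H] (M : Matrix ν ν 𝓑(H)) (ξ η : ν → H) :
    matForm Mᴴ ξ η = starRingEnd ℂ (matForm M η ξ) := by
  simp only [matForm, map_sum, inner_conj_symm, conjTranspose_apply,
    ContinuousLinearMap.star_eq_adjoint, ContinuousLinearMap.adjoint_inner_right]
  exact Finset.sum_comm

theorem matOp_apply (M : Matrix ν ν 𝓑(H)) (ξ : PiLp 2 fun _ : ν => H) (i : ν) :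
    matOp M ξ i = ∑ j, M i j (ξ j) := by
  simp [matOp]

theorem inner_matOp (M : Matrix ν ν 𝓑(H)) (ξ η : PiLp 2 fun _ : ν => H) :
    ⟪ξ, matOp M η⟫_ℂ = matForm M ξ.ofLp η.ofLp := by
  simp [matForm, PiLp.inner_apply, matOp_apply, inner_sum]

theorem norm_matForm_le (M : Matrix ν ν 𝓑(H)) (ξ η : ν → H) :
    ‖matForm M ξ η‖ ≤ ‖matOp M‖ * ‖WithLp.toLp 2 ξ‖ * ‖WithLp.toLp 2 η‖ := by
  rw [show matForm M ξ η = ⟪WithLp.toLp 2 ξ, matOp M (WithLp.toLp 2 η)⟫_ℂ from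
    (inner_matOp M _ _).symm]
  calc _ ≤ ‖WithLp.toLp 2 ξ‖ * ‖matOp M (WithLp.toLp 2 η)‖ := norm_inner_le_norm _ _
    _ ≤ ‖WithLp.toLp 2 ξ‖ * (‖matOp M‖ * ‖WithLp.toLp 2 η‖) := by
      gcongr; exact (matOp M).le_opNorm _
    _ = _ := by ring

theorem norm_matOp_le_of_re_matForm_le {M : Matrix ν ν 𝓑(H)} {c : ℝ} (hc : 0 ≤ c)
    (h : ∀ ξ η : ν → H, ‖WithLp.toLp 2 ξ‖ = 1 → ‖WithLp.toLp 2 η‖ = 1 →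
      (matForm M ξ η).re ≤ c) : ‖matOp M‖ ≤ c := by
  refine ContinuousLinearMap.opNorm_le_of_re_inner_le (𝕜 := ℂ) hc fun η ξ hη hξ => ?_
  rw [inner_re_symm, inner_matOp]
  exact h ξ.ofLp η.ofLp hξ hη

theorem norm_matOp_le_of_matForm_eq {T : Matrix ν ν 𝓑(H)} {M : Matrix μ μ 𝓑(K)}
    (U : (ν → H) → μ → K) (hU : ∀ ξ, ‖WithLp.toLp 2 (U ξ)‖ ≤ ‖WithLp.toLp 2 ξ‖)
    (hT : ∀ ξ η, matForm T ξ η = matForm M (U ξ) (U η)) : ‖matOp T‖ ≤ ‖matOp M‖ := by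
  refine norm_matOp_le_of_re_matForm_le (norm_nonneg (matOp M)) fun ξ η hξ hη => ?_
  calc (matForm T ξ η).re ≤ ‖matForm M (U ξ) (U η)‖ := hT ξ η ▸ Complex.re_le_norm _
    _ ≤ ‖matOp M‖ * ‖WithLp.toLp 2 (U ξ)‖ * ‖WithLp.toLp 2 (U η)‖ := norm_matForm_le M _ _
    _ ≤ ‖matOp M‖ * 1 * 1 := by
      gcongr
      · exact (hU ξ).trans_eq hξ
      · exact (hU η).trans_eq hη
    _ = ‖matOp M‖ := by ring

theorem matOp_injective : Function.Injective (matOp (H := H) (ν := ν)) := by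
  classical
  intro M N h
  ext i j v
  simpa [matOp_apply, Pi.single_apply, apply_ite, Finset.sum_ite_eq] using
    congrArg (fun T => T (PiLp.single 2 j v) i) h

theorem norm_matOp_unique [Unique ν] (M : Matrix ν ν 𝓑(H)) :
    ‖matOp M‖ = ‖M default default‖ := by
  have hnorm (ξ : PiLp 2 fun _ : ν => H) : ‖ξ‖ = ‖ξ default‖ := by simp [PiLp.norm_eq_of_L2]
  have happly (ξ : PiLp 2 fun _ : ν => H) : ‖matOp M ξ‖ = ‖M default default (ξ default)‖ := by
    rw [hnorm, matOp_apply, Fintype.sum_unique]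
  refine le_antisymm ?_ ?_
  · refine ContinuousLinearMap.opNorm_le_bound _ (norm_nonneg _) fun ξ => ?_
    rw [happly, hnorm ξ]
    exact (M default default).le_opNorm _
  · refine ContinuousLinearMap.opNorm_le_bound _ (norm_nonneg (matOp M)) fun v => ?_
    simpa only [happly, hnorm] using (matOp M).le_opNorm (WithLp.toLp 2 fun _ => v)

end OperatorMatrices

section MatrixPositivity

variable {R : Type*} [NonUnitalSemiring R] [StarRing R]
variable {A B : Type*} [NonUnitalCStarAlgebra A] [NonUnitalCStarAlgebra B]
variable {H : Type*} [NormedAddCommGroup H] [InnerProductSpace ℂ H] [CompleteSpace H]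
variable {K : Type*} [NormedAddCommGroup K] [InnerProductSpace ℂ K] [CompleteSpace K]
variable {ν μ : Type*} [Fintype ν] [Fintype μ]

theorem MatPos.submatrix_equiv {M : Matrix ν ν R} (h : MatPos M) (e : μ ≃ ν) :
    MatPos (M.submatrix e e) := by
  obtain ⟨N, rfl⟩ := h
  exact ⟨N.submatrix e e, by rw [conjTranspose_submatrix, submatrix_mul_equiv]⟩

theorem MatPos.isHermitian {M : Matrix ν ν R} (h : MatPos M) : M.IsHermitian := by
  obtain ⟨N, rfl⟩ := h
  exact Matrix.isHermitian_conjTranspose_mul_self N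

theorem MatPos.map_star_mul_mul {M : Matrix ν ν R} (h : MatPos M) (f : R) :
    MatPos (M.map fun b => star f * b * f) := by
  obtain ⟨N, rfl⟩ := h
  refine ⟨N.map (· * f), ?_⟩
  ext i j
  simp [Matrix.mul_apply, Finset.mul_sum, Finset.sum_mul, mul_assoc]

theorem matPos_unique_iff [Unique ν] {M : Matrix ν ν R} :
    MatPos M ↔ ∃ r, M default default = star r * r := by
  constructor
  · rintro ⟨N, rfl⟩
    exact ⟨N default default, by simp [Matrix.mul_apply]⟩
  · rintro ⟨r, hr⟩
    refine ⟨Matrix.of fun _ _ => r, ?_⟩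
    ext i j
    simpa [Matrix.mul_apply, Subsingleton.elim i default, Subsingleton.elim j default] using hr

theorem matPos_map_iff (φ : A →⋆ₙₐ[ℂ] B) (hφ : Function.Injective φ) {M : Matrix ν ν A} :
    MatPos (M.map φ) ↔ MatPos M := by
  let := CStarAlgebra.spectralOrder A
  have := CStarAlgebra.spectralOrderedRing A
  let := CStarAlgebra.spectralOrder B
  have := CStarAlgebra.spectralOrderedRing B
  have hinj : Function.Injective (CStarMatrix.mapₙₐ (n := ν) φ) := fun M N h => by
    ext i j
    exact hφ (congrFun (congrFun h i) j)
  constructor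
  · exact exists_eq_star_mul_self_of_map (CStarMatrix.mapₙₐ φ) hinj (x := CStarMatrix.ofMatrix M)
  · rintro ⟨N, rfl⟩
    refine ⟨N.map φ, ?_⟩
    ext i j : 2
    simp [Matrix.mul_apply, map_sum, map_star]

/-- The amplification `id ⊗ ι` of a representation `ι` to matrices, acting on `H ⊕₂ ⋯ ⊕₂ H`. -/
def matRep (ι : A →⋆ₙₐ[ℂ] 𝓑(H)) :
    CStarMatrix ν ν A →⋆ₙₐ[ℂ] 𝓑(PiLp 2 fun _ : ν => H) where
  toFun M := matOp (Matrix.map (CStarMatrix.ofMatrix.symm M) ι)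
  map_smul' c M := by
    ext ξ i
    simp [matOp_apply, Finset.smul_sum]
  map_zero' := by
    ext ξ i
    simp [matOp_apply]
  map_add' M N := by
    ext ξ i
    simp [matOp_apply, Finset.sum_add_distrib]
  map_mul' M N := by
    ext ξ i
    simpa [matOp_apply, CStarMatrix.mul_apply, map_sum, Finset.sum_apply] using Finset.sum_comm
  map_star' M := by
    rw [ContinuousLinearMap.star_eq_adjoint, ContinuousLinearMap.eq_adjoint_iff]
    intro ξ η
    simp only [PiLp.inner_apply, matOp_apply, inner_sum, sum_inner]
    rw [Finset.sum_comm]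
    refine Finset.sum_congr rfl fun i _ => Finset.sum_congr rfl fun j _ => ?_
    simp [CStarMatrix.star_apply, map_star, ContinuousLinearMap.star_eq_adjoint,
      ContinuousLinearMap.adjoint_inner_left]

theorem matRep_ofMatrix (ι : A →⋆ₙₐ[ℂ] 𝓑(H)) (M : Matrix ν ν A) :
    matRep ι (CStarMatrix.ofMatrix M) = matOp (M.map ι) := rfl

theorem matRep_injective (ι : A →⋆ₙₐ[ℂ] 𝓑(H)) (hι : Function.Injective ι) :
    Function.Injective (matRep (ν := ν) ι) := by
  intro M N h
  ext i j
  exact hι (congrFun (congrFun (matOp_injective h) i) j)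

theorem norm_matOp_map_eq (ι : A →⋆ₙₐ[ℂ] 𝓑(H)) (κ : A →⋆ₙₐ[ℂ] 𝓑(K))
    (hι : Function.Injective ι) (hκ : Function.Injective κ) (M : Matrix ν ν A) :
    ‖matOp (M.map ι)‖ = ‖matOp (M.map κ)‖ := by
  let := CStarAlgebra.spectralOrder A
  have := CStarAlgebra.spectralOrderedRing A
  rw [← matRep_ofMatrix, ← matRep_ofMatrix,
    NonUnitalStarAlgHom.norm_map (matRep (ν := ν) ι) (matRep_injective ι hι),
    NonUnitalStarAlgHom.norm_map (matRep (ν := ν) κ) (matRep_injective κ hκ)]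

theorem exists_eq_star_mul_self_iff_inner_nonneg {T : 𝓑(H)} :
    (∃ S, T = star S * S) ↔ ∀ ξ, 0 ≤ ⟪ξ, T ξ⟫_ℂ := by
  rw [← CStarAlgebra.nonneg_iff_eq_star_mul_self, ContinuousLinearMap.nonneg_iff_isPositive]
  refine ⟨fun h => h.inner_nonneg_right, fun h => ?_⟩
  refine (ContinuousLinearMap.isPositive_iff_complex T).2 fun ξ => ?_
  obtain ⟨hre, him⟩ := Complex.nonneg_iff.1 (h ξ)
  rw [← inner_conj_symm (T ξ) ξ]
  exact ⟨Complex.ext rfl (by simp only [Complex.conj_im, ← him]; simp), hre⟩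

theorem matPos_iff_forall_matForm_nonneg {M : Matrix ν ν 𝓑(H)} :
    MatPos M ↔ ∀ ξ, 0 ≤ matForm M ξ ξ := by
  have hform : (∀ ξ, 0 ≤ matForm M ξ ξ) ↔ ∃ S, matOp M = star S * S := by
    rw [exists_eq_star_mul_self_iff_inner_nonneg]
    exact ⟨fun h ξ => inner_matOp M ξ ξ ▸ h _,
      fun h ξ => (inner_matOp M (WithLp.toLp 2 ξ) (WithLp.toLp 2 ξ)) ▸ h (WithLp.toLp 2 ξ)⟩
  let rep : CStarMatrix ν ν 𝓑(H) →⋆ₙₐ[ℂ] _ := matRep (NonUnitalStarAlgHom.id ℂ 𝓑(H))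
  have hrep : matOp M = rep (CStarMatrix.ofMatrix M) := rfl
  rw [hform, hrep]
  constructor
  · rintro ⟨N, rfl⟩
    refine ⟨rep (CStarMatrix.ofMatrix N), ?_⟩
    rw [← map_star, ← map_mul]
    rfl
  · exact exists_eq_star_mul_self_of_map rep (matRep_injective _ Function.injective_id)

end MatrixPositivity

section BlockMatrices

variable {H : Type*} [NormedAddCommGroup H] [InnerProductSpace ℂ H] [CompleteSpace H]
variable {ν : Type*} [Fintype ν] [DecidableEq ν]

theorem matPos_fromBlocks_of_norm_le {B : Matrix ν ν 𝓑(H)} {c : ℝ} (hB : ‖matOp B‖ ≤ c) :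
    MatPos (Matrix.fromBlocks (diagonal fun _ => (c : ℂ) • 1) B Bᴴ
      (diagonal fun _ => (c : ℂ) • 1)) := by
  refine matPos_iff_forall_matForm_nonneg.2 fun ζ => ?_
  obtain ⟨ξ, η, rfl⟩ : ∃ ξ η, ζ = Sum.elim ξ η := ⟨_, _, (Sum.elim_comp_inl_inr ζ).symm⟩
  have hdiag (θ : ν → H) : matForm (diagonal fun _ : ν => (c : ℂ) • (1 : 𝓑(H))) θ θ =
      ((c * ‖WithLp.toLp 2 θ‖ ^ 2 : ℝ) : ℂ) := by
    simp [matForm_diagonal, PiLp.norm_sq_eq_of_L2, Finset.mul_sum]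
  rw [matForm_fromBlocks, hdiag, hdiag, matForm_conjTranspose, Complex.nonneg_iff]
  have hz : ‖matForm B ξ η‖ ≤ c * ‖WithLp.toLp 2 ξ‖ * ‖WithLp.toLp 2 η‖ :=
    (norm_matForm_le B ξ η).trans (by gcongr)
  have hc : 0 ≤ c := (norm_nonneg _).trans hB
  constructor
  · simp only [Complex.add_re, Complex.ofReal_re, Complex.conj_re]
    nlinarith [neg_le_of_abs_le ((Complex.abs_re_le_norm _).trans hz),
      mul_nonneg hc (sq_nonneg (‖WithLp.toLp 2 ξ‖ - ‖WithLp.toLp 2 η‖))]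
  · simp only [Complex.add_im, Complex.ofReal_im, Complex.conj_im]
    ring

theorem norm_matOp_le_of_matPos_fromBlocks {B : Matrix ν ν 𝓑(H)} {d e : ν → 𝓑(H)} {c : ℝ}
    (hc : 0 ≤ c) (hd : ∀ p, ‖d p‖ ≤ c) (he : ∀ p, ‖e p‖ ≤ c)
    (h : MatPos (Matrix.fromBlocks (diagonal d) B Bᴴ (diagonal e))) : ‖matOp B‖ ≤ c := by
  have hdiag {d : ν → 𝓑(H)} (hd : ∀ p, ‖d p‖ ≤ c) {ξ : ν → H} (hξ : ‖WithLp.toLp 2 ξ‖ = 1) :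
      (matForm (diagonal d) ξ ξ).re ≤ c :=
    calc (matForm (diagonal d) ξ ξ).re = ∑ p, (⟪ξ p, d p (ξ p)⟫_ℂ).re := by
          rw [matForm_diagonal, Complex.re_sum]
      _ ≤ ∑ p, c * ‖ξ p‖ ^ 2 := by
          refine Finset.sum_le_sum fun p _ => (Complex.re_le_norm _).trans ?_
          calc ‖⟪ξ p, d p (ξ p)⟫_ℂ‖ ≤ ‖ξ p‖ * (c * ‖ξ p‖) :=
                (norm_inner_le_norm _ _).trans (by gcongr; exact (d p).le_of_opNorm_le (hd p) _)
            _ = c * ‖ξ p‖ ^ 2 := by ring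
      _ = c * ‖WithLp.toLp 2 ξ‖ ^ 2 := by rw [PiLp.norm_sq_eq_of_L2, Finset.mul_sum]
      _ = c := by rw [hξ]; ring
  refine norm_matOp_le_of_re_matForm_le hc fun ξ η hξ hη => ?_
  have hneg : matForm B (-ξ) η = -matForm B ξ η := by simp [matForm]
  have hpos := (Complex.nonneg_iff.1
    (matPos_iff_forall_matForm_nonneg.1 h (Sum.elim (-ξ) η))).1
  rw [matForm_fromBlocks, matForm_conjTranspose, hneg] at hpos
  simp only [Complex.add_re, Complex.conj_re, Complex.neg_re] at hpos
  have hξ' := hdiag hd (ξ := -ξ) (by rw [WithLp.toLp_neg, norm_neg, hξ])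
  linarith [hdiag he hη]

end BlockMatrices

section SchurMultiplication

variable {A : Type*} [NonUnitalCStarAlgebra A]
variable {ν : Type*} {X : Type*}

/-- Entrywise action of a kernel of maps `φ` on a matrix over `A` whose rows and columns are
labelled by the points `x p`. -/
def schurMul (φ : X → X → (A →ₗ[ℂ] A)) (x : ν → X) (a : Matrix ν ν A) : Matrix ν ν A :=
  Matrix.of fun p q => φ (x p) (x q) (a p q)

variable [Fintype ν] {φ : X → X → (A →ₗ[ℂ] A)}

theorem PositiveTypeA.matPos_schurMul (hφ : PositiveTypeA φ) (x : ν → X) {a : Matrix ν ν A}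
    (ha : MatPos a) : MatPos (schurMul φ x a) := by
  let e := Fintype.equivFin ν
  convert (hφ _ (x ∘ e.symm) _ (ha.submatrix_equiv e.symm)).submatrix_equiv e using 1
  ext i j
  simp [schurMul]

theorem PositiveTypeA.continuous (hφ : PositiveTypeA φ) (s t : X) : Continuous (φ s t) := by
  let := CStarAlgebra.spectralOrder A
  have := CStarAlgebra.spectralOrderedRing A
  let Ψ : CStarMatrix (Fin 2) (Fin 2) A →ₗ[ℂ] CStarMatrix (Fin 2) (Fin 2) A :=
    { toFun := fun a => CStarMatrix.ofMatrix (schurMul φ ![s, t] (CStarMatrix.ofMatrix.symm a))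
      map_add' := fun a b => by ext; simp [schurMul]
      map_smul' := fun c a => by ext; simp [schurMul] }
  obtain ⟨K, -, hK⟩ := exists_bound_of_map_star_mul_self Ψ fun b =>
    hφ.matPos_schurMul ![s, t] ⟨CStarMatrix.ofMatrix.symm b, rfl⟩
  have hΨ : Continuous Ψ := AddMonoidHomClass.continuous_of_bound Ψ K hK
  have hsingle : Continuous fun a : A => (Matrix.single 0 1 a : Matrix (Fin 2) (Fin 2) A) :=
    continuous_matrix fun i j => by
      by_cases h : 0 = i ∧ 1 = j
      · simpa [Matrix.single_apply, h] using continuous_id'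
      · simpa [Matrix.single_apply, h] using continuous_const
  have hblock : Continuous fun a : A =>
      CStarMatrix.ofMatrix (Matrix.single (0 : Fin 2) (1 : Fin 2) a) :=
    CStarMatrix.ofMatrixL.continuous.comp hsingle
  have hentry : Continuous fun a : CStarMatrix (Fin 2) (Fin 2) A => a 0 1 :=
    (continuous_id.matrix_elem 0 1).comp CStarMatrix.ofMatrixL.symm.continuous
  convert hentry.comp (hΨ.comp hblock) using 1
  ext a
  simp [Ψ, schurMul]

theorem PositiveTypeA.schurMul_fromBlocks [DecidableEq ν] (hφ : PositiveTypeA φ) (x : ν → X)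
    {b : Matrix ν ν A} {d e : ν → A}
    (h : MatPos (Matrix.fromBlocks (diagonal d) b bᴴ (diagonal e))) :
    schurMul φ (Sum.elim x x) (Matrix.fromBlocks (diagonal d) b bᴴ (diagonal e)) =
      Matrix.fromBlocks (diagonal fun p => φ (x p) (x p) (d p)) (schurMul φ x b)
        (schurMul φ x b)ᴴ (diagonal fun p => φ (x p) (x p) (e p)) := by
  have hdiag (d : ν → A) (p q : ν) : φ (x p) (x q) (diagonal d p q) =
      diagonal (fun p => φ (x p) (x p) (d p)) p q := by
    rcases eq_or_ne p q with rfl | hpq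
    · simp
    · simp [hpq]
  have hherm := (hφ.matPos_schurMul (Sum.elim x x) h).isHermitian
  ext (p | p) (q | q)
  · exact hdiag d p q
  · rfl
  · exact (hherm.apply (Sum.inr p) (Sum.inl q)).symm
  · exact hdiag e p q

end SchurMultiplication

section ApproximateUnit

variable {A : Type*} [NonUnitalCStarAlgebra A]
variable {H : Type*} [NormedAddCommGroup H] [InnerProductSpace ℂ H] [CompleteSpace H]
variable {ν : Type*} [Fintype ν] {X : Type*} {φ : X → X → (A →ₗ[ℂ] A)}
variable (ι : A →⋆ₙₐ[ℂ] 𝓑(H))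

theorem exists_approximateUnit_tendsto_star_mul_mul (A : Type*) [NonUnitalCStarAlgebra A] :
    ∃ l : Filter A, l.NeBot ∧ (∀ᶠ f in l, ‖f‖ ≤ 1) ∧
      ∀ b : A, Tendsto (fun f => star f * b * f) l (𝓝 b) := by
  let := CStarAlgebra.spectralOrder A
  have := CStarAlgebra.spectralOrderedRing A
  have hl := CStarAlgebra.increasingApproximateUnit A
  refine ⟨CStarAlgebra.approximateUnit A, hl.neBot, hl.eventually_norm, fun b => ?_⟩
  have hright : Tendsto (fun f => f * (b * f - b)) (CStarAlgebra.approximateUnit A) (𝓝 0) := by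
    refine squeeze_zero_norm' (a := fun f => ‖b * f - b‖) ?_ ?_
    · filter_upwards [hl.eventually_norm] with f hf
      exact (norm_mul_le _ _).trans (mul_le_of_le_one_left (norm_nonneg _) hf)
    · simpa using ((hl.tendsto_mul_left b).sub_const b).norm
  have hsum := hright.add (hl.tendsto_mul_right b)
  rw [zero_add] at hsum
  refine hsum.congr' ?_
  filter_upwards [hl.eventually_star_eq] with f hf
  rw [hf, mul_sub, sub_add_cancel, mul_assoc]

theorem matPos_fromBlocks_star_mul_mul [DecidableEq ν] (hι : Function.Injective ι)
    (a : Matrix ν ν A) (f : A) :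
    MatPos (Matrix.fromBlocks (diagonal fun _ => (‖matOp (a.map ι)‖ : ℂ) • (star f * f))
      (a.map fun b => star f * b * f) (a.map fun b => star f * b * f)ᴴ
      (diagonal fun _ => (‖matOp (a.map ι)‖ : ℂ) • (star f * f))) := by
  rw [← matPos_map_iff ι hι]
  refine (congrArg MatPos ?_).mpr
    ((matPos_fromBlocks_of_norm_le (B := a.map ι) le_rfl).map_star_mul_mul (ι f))
  have hstar (b : A) : ι (star b) = star (ι b) := map_star ι b
  ext (p | p) (q | q) : 1 <;>
    rcases eq_or_ne p q with rfl | hpq <;> simp [*, mul_assoc, -Complex.coe_smul]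

theorem PositiveTypeA.norm_matOp_schurMul_star_mul_mul_le (hι : Function.Injective ι)
    (hφ : PositiveTypeA φ) {C : ℝ} (hC : ∀ s a, ‖φ s s a‖ ≤ C * ‖a‖) (hC₀ : 0 ≤ C)
    (x : ν → X) (a : Matrix ν ν A) {f : A} (hf : ‖f‖ ≤ 1) :
    ‖matOp ((schurMul φ x (a.map fun b => star f * b * f)).map ι)‖ ≤ C * ‖matOp (a.map ι)‖ := by
  classical
  have hblock := matPos_fromBlocks_star_mul_mul ι hι a f
  have himage := hφ.matPos_schurMul (Sum.elim x x) hblock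
  rw [hφ.schurMul_fromBlocks x hblock, ← matPos_map_iff ι hι, fromBlocks_map,
    conjTranspose_map ι (map_star ι), diagonal_map (map_zero ι)] at himage
  have hdiag (p : ν) :
      ‖ι (φ (x p) (x p) ((‖matOp (a.map ι)‖ : ℂ) • (star f * f)))‖ ≤ C * ‖matOp (a.map ι)‖ := by
    rw [NonUnitalStarAlgHom.norm_map ι hι]
    refine (hC _ _).trans ?_
    gcongr
    rw [norm_smul, Complex.norm_real, norm_norm, CStarRing.norm_star_mul_self]
    exact mul_le_of_le_one_right (norm_nonneg _) (mul_le_one₀ hf (norm_nonneg _) hf)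
  exact norm_matOp_le_of_matPos_fromBlocks (by positivity) hdiag hdiag himage

theorem PositiveTypeA.norm_matOp_schurMul_le (hι : Function.Injective ι) (hφ : PositiveTypeA φ)
    {C : ℝ} (hC : ∀ s a, ‖φ s s a‖ ≤ C * ‖a‖) (hC₀ : 0 ≤ C) (x : ν → X) (a : Matrix ν ν A) :
    ‖matOp ((schurMul φ x a).map ι)‖ ≤ C * ‖matOp (a.map ι)‖ := by
  obtain ⟨l, hl, hnorm, hlim⟩ := exists_approximateUnit_tendsto_star_mul_mul A
  have hιc : Continuous ι := (NonUnitalStarAlgHom.isometry ι hι).continuous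
  refine norm_matOp_le_of_re_matForm_le (by positivity) fun ξ η hξ hη => ?_
  have hform : Tendsto (fun f => matForm ((schurMul φ x (a.map fun b => star f * b * f)).map ι) ξ η)
      l (𝓝 (matForm ((schurMul φ x a).map ι) ξ η)) := by
    refine tendsto_finsetSum _ fun p _ => tendsto_finsetSum _ fun q _ => ?_
    have hpq := ((hιc.comp (hφ.continuous (x p) (x q))).tendsto (a p q)).comp (hlim (a p q))
    exact tendsto_const_nhds.inner
      (((ContinuousLinearMap.apply ℂ H (η q)).continuous.tendsto _).comp hpq)
  refine le_of_tendsto ((Complex.continuous_re.tendsto _).comp hform) ?_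
  filter_upwards [hnorm] with f hf
  refine (Complex.re_le_norm _).trans ((norm_matForm_le _ ξ η).trans ?_)
  rw [hξ, hη, mul_one, mul_one]
  exact hφ.norm_matOp_schurMul_star_mul_mul_le ι hι hC hC₀ x a hf

end ApproximateUnit

section Entries

variable {H : Type*} [NormedAddCommGroup H] [InnerProductSpace ℂ H]
variable {X : Type*}

theorem lpEval_apply (s : X) (f : ℓ²(X,H)) : lpEval s f = f s := rfl

theorem lpEval_lpSingle_self (s : X) (v : H) : lpEval s (lpSingle s v) = v := by
  classical
  exact lp.single_apply_self (E := fun _ : X => H) 2 s v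

theorem lpEval_lpSingle_of_ne {s r : X} (h : s ≠ r) (v : H) : lpEval s (lpSingle r v) = 0 := by
  classical
  exact lp.single_apply_ne (E := fun _ : X => H) 2 r v h

theorem inner_lpSingle_left (s : X) (v : H) (f : ℓ²(X,H)) :
    ⟪lpSingle s v, f⟫_ℂ = ⟪v, lpEval s f⟫_ℂ := by
  classical
  exact lp.inner_single_left (𝕜 := ℂ) s v f

theorem ext_lpEval {x y : 𝓑(ℓ²(X,H))} (h : ∀ f s, lpEval s (x f) = lpEval s (y f)) : x = y :=
  ContinuousLinearMap.ext fun f => lp.ext (funext (h f))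

/-- The `(s, r)` matrix entry of an operator on `ℓ²(X,H)`, as a continuous linear map. -/
def entry (s r : X) : 𝓑(ℓ²(X,H)) →L[ℂ] 𝓑(H) :=
  ContinuousLinearMap.postcomp H (lpEval s) ∘L ContinuousLinearMap.precomp ℓ²(X,H) (lpSingle r)

theorem entry_apply (s r : X) (x : 𝓑(ℓ²(X,H))) (v : H) :
    entry s r x v = lpEval s (x (lpSingle r v)) := rfl

theorem entry_elemOp_self (s r : X) (T : 𝓑(H)) : entry s r (elemOp s r T) = T := by
  ext v
  simp only [entry_apply, elemOp, ContinuousLinearMap.comp_apply, lpEval_lpSingle_self]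

theorem entry_elemOp_of_ne {s r : X} {p : X × X} (hp : p ≠ (s, r)) (T : 𝓑(H)) :
    entry s r (elemOp p.1 p.2 T) = 0 := by
  ext v
  simp only [entry_apply, elemOp, ContinuousLinearMap.comp_apply, _root_.zero_apply]
  by_cases hr : p.2 = r
  · exact lpEval_lpSingle_of_ne (fun hs => hp (Prod.ext hs.symm hr)) _
  · rw [lpEval_lpSingle_of_ne hr, map_zero, map_zero, map_zero]

theorem entry_TOp {k : X × X → 𝓑(H)} (hk : (Function.support k).Finite) (s r : X) :
    entry s r (TOp k) = k (s, r) := by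
  have hfin : (Function.support fun p : X × X => elemOp p.1 p.2 (k p)).Finite :=
    hk.subset fun p hp h0 => hp (by simp [elemOp, h0])
  rw [TOp, map_finsum _ hfin, finsum_eq_single _ (s, r) fun p hp => entry_elemOp_of_ne hp _,
    entry_elemOp_self]

end Entries

section Compression

variable {H : Type*} [NormedAddCommGroup H] {X : Type*} {ν : Type*}

theorem norm_restrict_le [Fintype ν] (E : Finset X) (ξ : ν → ℓ²(X,H)) :
    ‖WithLp.toLp 2 fun p : ν × E => ξ p.1 (p.2 : X)‖ ≤ ‖WithLp.toLp 2 ξ‖ := by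
  rw [← sq_le_sq₀ (norm_nonneg _) (norm_nonneg _), PiLp.norm_sq_eq_of_L2, PiLp.norm_sq_eq_of_L2,
    Fintype.sum_prod_type]
  refine Finset.sum_le_sum fun i _ => ?_
  rw [Finset.sum_coe_sort E fun s => ‖ξ i s‖ ^ 2]
  simpa using lp.sum_rpow_le_norm_rpow (p := 2) (by norm_num) (ξ i) E

variable [InnerProductSpace ℂ H]

/-- The compression of a matrix of operators on `ℓ²(X,H)` to the coordinates in a finite set `E`,
as an operator matrix indexed by `ν × E`. -/
def compression (E : Finset X) (M : Matrix ν ν 𝓑(ℓ²(X,H))) : Matrix (ν × E) (ν × E) 𝓑(H) :=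
  Matrix.of fun p q => entry (p.2 : X) (q.2 : X) (M p.1 q.1)

/-- Extension by zero of families indexed by `E`, the isometry implementing `compression E`. -/
def extendByZero (E : Finset X) (v : ν × E → H) : ν → ℓ²(X,H) :=
  fun i => ∑ s : E, lpSingle (s : X) (v (i, s))

theorem lpEval_extendByZero (E : Finset X) (v : ν × E → H) (i : ν) (s : E) :
    lpEval (s : X) (extendByZero E v i) = v (i, s) := by
  rw [extendByZero, map_sum, Finset.sum_eq_single s _ (by simp), lpEval_lpSingle_self]
  exact fun r _ hr => lpEval_lpSingle_of_ne (fun h => hr (Subtype.ext h.symm)) _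

theorem tendsto_extendByZero (ξ : ν → ℓ²(X,H)) (i : ν) :
    Tendsto (fun E : Finset X => extendByZero E (fun p : ν × E => ξ p.1 (p.2 : X)) i) atTop
      (𝓝 (ξ i)) := by
  classical
  have hsum := lp.hasSum_single (p := 2) (by norm_num) (ξ i)
  exact hsum.congr fun E => (Finset.sum_coe_sort E fun s => lpSingle s (ξ i s)).symm

variable [Fintype ν]

theorem matForm_compression (E : Finset X) (M : Matrix ν ν 𝓑(ℓ²(X,H))) (v w : ν × E → H) :
    matForm (compression E M) v w = matForm M (extendByZero E v) (extendByZero E w) := by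
  simp only [matForm, compression, extendByZero, Fintype.sum_prod_type, map_sum, sum_inner,
    inner_sum, inner_lpSingle_left, Matrix.of_apply, entry_apply]
  refine Finset.sum_congr rfl fun i _ => ?_
  rw [Finset.sum_comm]
  exact Finset.sum_congr rfl fun j _ => Finset.sum_comm

theorem norm_extendByZero (E : Finset X) (v : ν × E → H) :
    ‖WithLp.toLp 2 (extendByZero E v)‖ = ‖WithLp.toLp 2 v‖ := by
  rw [← sq_eq_sq₀ (norm_nonneg _) (norm_nonneg _), PiLp.norm_sq_eq_of_L2, PiLp.norm_sq_eq_of_L2,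
    Fintype.sum_prod_type]
  refine Finset.sum_congr rfl fun i _ => ?_
  have hinner : ⟪extendByZero E v i, extendByZero E v i⟫_ℂ = ∑ s : E, ⟪v (i, s), v (i, s)⟫_ℂ := by
    conv_lhs => rw [extendByZero, sum_inner]
    refine Finset.sum_congr rfl fun s _ => ?_
    rw [inner_lpSingle_left, ← extendByZero, lpEval_extendByZero]
  simp only [inner_self_eq_norm_sq_to_K] at hinner
  exact_mod_cast hinner

theorem norm_matOp_compression_le (E : Finset X) (M : Matrix ν ν 𝓑(ℓ²(X,H))) :
    ‖matOp (compression E M)‖ ≤ ‖matOp M‖ :=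
  norm_matOp_le_of_matForm_eq (extendByZero E) (fun v => (norm_extendByZero E v).le)
    (matForm_compression E M)

theorem MatPos.compression [CompleteSpace H] {M : Matrix ν ν 𝓑(ℓ²(X,H))} (hM : MatPos M)
    (E : Finset X) : MatPos (compression E M) :=
  matPos_iff_forall_matForm_nonneg.2 fun v => by
    rw [matForm_compression]
    exact matPos_iff_forall_matForm_nonneg.1 hM _

theorem tendsto_matForm_compression (M : Matrix ν ν 𝓑(ℓ²(X,H))) (ξ η : ν → ℓ²(X,H)) :
    Tendsto (fun E : Finset X => matForm (compression E M) (fun p => ξ p.1 (p.2 : X))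
      fun p => η p.1 (p.2 : X)) atTop (𝓝 (matForm M ξ η)) := by
  simp only [matForm_compression]
  exact tendsto_finsetSum _ fun i _ => tendsto_finsetSum _ fun j _ =>
    (tendsto_extendByZero ξ i).inner
      (((M i j).continuous.tendsto _).comp (tendsto_extendByZero η j))

theorem norm_matOp_le_of_forall_compression {M : Matrix ν ν 𝓑(ℓ²(X,H))} {c : ℝ} (hc : 0 ≤ c)
    (h : ∀ E : Finset X, ‖matOp (compression E M)‖ ≤ c) : ‖matOp M‖ ≤ c := by
  refine norm_matOp_le_of_re_matForm_le hc fun ξ η hξ hη => ?_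
  refine le_of_tendsto' ((Complex.continuous_re.tendsto _).comp (tendsto_matForm_compression M ξ η))
    fun E => (Complex.re_le_norm _).trans ((norm_matForm_le _ _ _).trans ?_)
  calc _ ≤ c * 1 * 1 := by
        gcongr
        · exact h E
        · exact (norm_restrict_le E ξ).trans_eq hξ
        · exact (norm_restrict_le E η).trans_eq hη
    _ = c := by ring

theorem matPos_of_forall_compression [CompleteSpace H] {M : Matrix ν ν 𝓑(ℓ²(X,H))}
    (h : ∀ E : Finset X, MatPos (compression E M)) : MatPos M :=
  matPos_iff_forall_matForm_nonneg.2 fun ξ =>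
    ge_of_tendsto' (tendsto_matForm_compression M ξ ξ) fun E =>
      matPos_iff_forall_matForm_nonneg.1 (h E) _

end Compression

section SchurGraph

variable {H : Type*} [NormedAddCommGroup H] [InnerProductSpace ℂ H] [CompleteSpace H]
variable {A : Type*} [NonUnitalCStarAlgebra A] {X : Type*} {ν : Type*}
variable (ι : A →⋆ₙₐ[ℂ] 𝓑(H)) (φ : X → X → (A →ₗ[ℂ] A))

/-- The graph of entrywise multiplication by `φ` on `B(ℓ²(X,H))`: the pairs `(x, y)` such that `x`
has entries in `ι(A)` and `y` has the entries of `x` transformed by `φ`. Being defined for every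
`φ`, it lets Schur multiplication be handled before it is known to be bounded. -/
def schurGraph : Submodule ℂ (𝓑(ℓ²(X,H)) × 𝓑(ℓ²(X,H))) :=
  ⨅ (s : X) (r : X), (LinearMap.range ((iotaLin ι).prod (iotaLin ι ∘ₗ φ s r))).comap
    ((entry s r).prodMap (entry s r)).toLinearMap

variable {ι φ}

theorem mem_schurGraph {x y : 𝓑(ℓ²(X,H))} :
    (x, y) ∈ schurGraph ι φ ↔ ∀ s r, ∃ a, entry s r x = ι a ∧ entry s r y = ι (φ s r a) := by
  simp only [schurGraph, Submodule.mem_iInf, Submodule.mem_comap, LinearMap.mem_range]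
  refine forall₂_congr fun s r => exists_congr fun a => ?_
  exact Prod.ext_iff.trans (and_congr eq_comm eq_comm)

theorem exists_compression_eq_of_mem_schurGraph {M Y : Matrix ν ν 𝓑(ℓ²(X,H))}
    (h : ∀ i j, (M i j, Y i j) ∈ schurGraph ι φ) (E : Finset X) :
    ∃ a : Matrix (ν × E) (ν × E) A, compression E M = a.map ι ∧
      compression E Y = (schurMul φ (fun p => (p.2 : X)) a).map ι := by
  simp only [mem_schurGraph] at h
  choose b hM hY using h
  exact ⟨Matrix.of fun p q => b p.1 q.1 p.2 q.2, Matrix.ext fun _ _ => hM _ _ _ _,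
    Matrix.ext fun _ _ => hY _ _ _ _⟩

variable [Fintype ν]

theorem PositiveTypeA.norm_matOp_le_of_mem_schurGraph (hφ : PositiveTypeA φ)
    (hι : Function.Injective ι) {C : ℝ} (hC : ∀ s a, ‖φ s s a‖ ≤ C * ‖a‖) (hC₀ : 0 ≤ C)
    {M Y : Matrix ν ν 𝓑(ℓ²(X,H))} (h : ∀ i j, (M i j, Y i j) ∈ schurGraph ι φ) :
    ‖matOp Y‖ ≤ C * ‖matOp M‖ := by
  refine norm_matOp_le_of_forall_compression (by positivity) fun E => ?_
  obtain ⟨a, hM, hY⟩ := exists_compression_eq_of_mem_schurGraph h E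
  calc ‖matOp (compression E Y)‖ ≤ C * ‖matOp (compression E M)‖ := by
        rw [hM, hY]
        exact hφ.norm_matOp_schurMul_le ι hι hC hC₀ _ a
    _ ≤ C * ‖matOp M‖ := by gcongr; exact norm_matOp_compression_le E M

theorem PositiveTypeA.matPos_of_mem_schurGraph (hφ : PositiveTypeA φ)
    (hι : Function.Injective ι) {M Y : Matrix ν ν 𝓑(ℓ²(X,H))}
    (h : ∀ i j, (M i j, Y i j) ∈ schurGraph ι φ) (hM : MatPos M) : MatPos Y := by
  refine matPos_of_forall_compression fun E => ?_
  obtain ⟨a, hMa, hYa⟩ := exists_compression_eq_of_mem_schurGraph h E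
  have ha : MatPos a := (matPos_map_iff ι hι).1 (hMa ▸ hM.compression E)
  exact hYa ▸ (matPos_map_iff ι hι).2 (hφ.matPos_schurMul _ ha)

theorem TKer_mem_schurGraph {k : X × X → A} (hk : (Function.support k).Finite) :
    (TKer ι k, TOp fun p => (iotaLin ι ∘ₗ φ p.1 p.2) (k p)) ∈ schurGraph ι φ := by
  refine mem_schurGraph.2 fun s r => ⟨k (s, r), ?_, ?_⟩
  · exact entry_TOp (hk.subset fun p hp h0 => hp (by simp [h0])) s r
  · exact entry_TOp (hk.subset fun p hp h0 => hp (by simp [h0])) s r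

theorem isClosed_schurGraph (hι : Function.Injective ι) (hφ : ∀ s r, Continuous (φ s r)) :
    IsClosed (schurGraph ι φ : Set (𝓑(ℓ²(X,H)) × 𝓑(ℓ²(X,H)))) := by
  have hisom := NonUnitalStarAlgHom.isometry ι hι
  have hrange (s r : X) :
      IsClosed (Set.range ((iotaLin ι).prod (iotaLin ι ∘ₗ φ s r))) := by
    have hcont : Continuous ((iotaLin ι).prod (iotaLin ι ∘ₗ φ s r)) :=
      hisom.continuous.prodMk (hisom.continuous.comp (hφ s r))
    refine AntilipschitzWith.isClosed_range (K := 1)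
      (AntilipschitzWith.of_le_mul_dist fun a b => ?_)
      (uniformContinuous_addMonoidHom_of_continuous hcont)
    rw [NNReal.coe_one, one_mul, ← hisom.dist_eq a b]
    exact le_max_left _ _
  simp only [schurGraph, Submodule.coe_iInf]
  exact isClosed_iInter fun s => isClosed_iInter fun r =>
    (hrange s r).preimage ((entry s r).continuous.prodMap (entry s r).continuous)

end SchurGraph

section RegularRepresentation

variable {H : Type*} [NormedAddCommGroup H] [InnerProductSpace ℂ H]
variable {G : Type*} [Group G]

theorem lpEval_lam (t : G) (f : ℓ²(G,H)) (s : G) : lpEval s (lam t f) = lpEval (t⁻¹ * s) f := rfl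

theorem lam_mul_lam (s t : G) : (lam s * lam t : 𝓑(ℓ²(G,H))) = lam (s * t) :=
  ext_lpEval fun f r => by
    rw [mul_apply_eq_comp, lpEval_lam, lpEval_lam, lpEval_lam, _root_.mul_inv_rev,
      mul_assoc]

theorem lam_one : (lam 1 : 𝓑(ℓ²(G,H))) = 1 :=
  ext_lpEval fun f r => by rw [lpEval_lam, inv_one, one_mul, one_apply_eq_self]

theorem inner_lam_right (t : G) (f g : ℓ²(G,H)) : ⟪f, lam t g⟫_ℂ = ⟪lam t⁻¹ f, g⟫_ℂ := by
  rw [lp.inner_eq_tsum, lp.inner_eq_tsum, ← (Equiv.mulLeft t).tsum_eq]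
  refine tsum_congr fun s => ?_
  simp only [Equiv.coe_mulLeft, ← lpEval_apply, lpEval_lam, inv_inv, inv_mul_cancel_left]

variable [CompleteSpace H]

theorem star_lam (t : G) : star (lam t : 𝓑(ℓ²(G,H))) = lam t⁻¹ :=
  Eq.symm <| (ContinuousLinearMap.eq_adjoint_iff _ _).2 fun f g => (inner_lam_right t f g).symm

variable {A : Type*} [NonUnitalCStarAlgebra A] (ι : A →⋆ₙₐ[ℂ] 𝓑(H)) (α : G → A ≃⋆ₐ[ℂ] A)

theorem lpEval_piRep (a : A) (f : ℓ²(G,H)) (s : G) :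
    lpEval s (piRep ι α a f) = ι (α s⁻¹ a) (lpEval s f) := rfl

theorem piRep_mul (a b : A) : piRep ι α (a * b) = piRep ι α a * piRep ι α b :=
  ext_lpEval fun f s => by
    rw [mul_apply_eq_comp, lpEval_piRep, lpEval_piRep, lpEval_piRep, map_mul, map_mul,
      mul_apply_eq_comp]

theorem star_piRep (a : A) : star (piRep ι α a) = piRep ι α (star a) := by
  refine Eq.symm <| (ContinuousLinearMap.eq_adjoint_iff _ _).2 fun f g => ?_
  rw [lp.inner_eq_tsum, lp.inner_eq_tsum]
  refine tsum_congr fun s => ?_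
  rw [← lpEval_apply, ← lpEval_apply s (piRep ι α a g), lpEval_piRep, lpEval_piRep, map_star,
    map_star, ContinuousLinearMap.star_eq_adjoint, ContinuousLinearMap.adjoint_inner_left]
  rfl

/-- The representation `π` of `A` on `ℓ²(G,H)` as a star homomorphism. -/
def piHom : A →⋆ₙₐ[ℂ] 𝓑(ℓ²(G,H)) where
  toFun := piRep ι α
  map_smul' := (piRepLin ι α).map_smul
  map_zero' := (piRepLin ι α).map_zero
  map_add' := (piRepLin ι α).map_add
  map_mul' := piRep_mul ι α
  map_star' a := (star_piRep ι α a).symm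

theorem piHom_apply (a : A) : piHom ι α a = piRep ι α a := rfl

variable {ι α}

theorem piHom_injective (hι : Function.Injective ι) : Function.Injective (piHom ι α) := by
  intro a b hab
  refine (α 1⁻¹).injective (hι (ContinuousLinearMap.ext fun v => ?_))
  have hv := congrArg (fun T => lpEval 1 (T (lpSingle 1 v))) hab
  simp only [piHom_apply, lpEval_piRep, lpEval_lpSingle_self] at hv
  exact hv

theorem IsAction.apply_inv_apply (hα : IsAction α) (s : G) (a : A) : α s (α s⁻¹ a) = a := by
  rw [← hα.2, mul_inv_cancel, hα.1]

variable (ι) in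
theorem IsAction.lam_mul_piRep (hα : IsAction α) (t : G) (a : A) :
    lam t * piRep ι α a = piRep ι α (α t a) * lam t :=
  ext_lpEval fun f s => by
    rw [mul_apply_eq_comp, mul_apply_eq_comp, lpEval_lam, lpEval_piRep,
      lpEval_piRep, lpEval_lam, ← hα.2, _root_.mul_inv_rev, inv_inv]

end RegularRepresentation

section CrossedProduct

variable {H : Type*} [NormedAddCommGroup H] [InnerProductSpace ℂ H] [CompleteSpace H]
variable {A : Type*} [NonUnitalCStarAlgebra A] {G : Type*} [Group G]
variable {ι : A →⋆ₙₐ[ℂ] 𝓑(H)} {α : G → A ≃⋆ₐ[ℂ] A}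

variable (ι α) in
/-- The linear span of the operators `π(a)λ_t`, whose closure is `CrossedSet ι α`. -/
def crossedSpan : Submodule ℂ 𝓑(ℓ²(G,H)) :=
  Submodule.span ℂ {x | ∃ (a : A) (t : G), x = piRep ι α a * lam t}

theorem piRep_mul_lam_mem_crossedSpan (a : A) (t : G) : piRep ι α a * lam t ∈ crossedSpan ι α :=
  Submodule.subset_span ⟨a, t, rfl⟩

theorem crossedSpan_le {W : Submodule ℂ 𝓑(ℓ²(G,H))} (h : ∀ a t, piRep ι α a * lam t ∈ W) :
    crossedSpan ι α ≤ W :=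
  Submodule.span_le.2 fun _ ⟨a, t, hx⟩ => hx ▸ h a t

theorem IsAction.mul_mem_crossedSpan (hα : IsAction α) {x y : 𝓑(ℓ²(G,H))}
    (hx : x ∈ crossedSpan ι α) (hy : y ∈ crossedSpan ι α) : x * y ∈ crossedSpan ι α := by
  suffices hle : crossedSpan ι α * crossedSpan ι α ≤ crossedSpan ι α from
    hle (Submodule.mul_mem_mul hx hy)
  rw [crossedSpan, Submodule.span_mul_span, Submodule.span_le]
  rintro _ ⟨_, ⟨a, s, rfl⟩, _, ⟨b, t, rfl⟩, rfl⟩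
  have hmul : piRep ι α a * lam s * (piRep ι α b * lam t) =
      piRep ι α (a * α s b) * lam (s * t) := by
    rw [piRep_mul, ← lam_mul_lam, mul_assoc, ← mul_assoc (lam s), hα.lam_mul_piRep]
    simp only [mul_assoc]
  exact Submodule.subset_span ⟨_, _, hmul⟩

theorem IsAction.star_mem_crossedSpan (hα : IsAction α) {x : 𝓑(ℓ²(G,H))}
    (hx : x ∈ crossedSpan ι α) : star x ∈ crossedSpan ι α := by
  induction hx using Submodule.span_induction with
  | mem x hx =>
    obtain ⟨a, t, rfl⟩ := hx
    rw [star_mul, star_lam, star_piRep, hα.lam_mul_piRep]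
    exact piRep_mul_lam_mem_crossedSpan _ _
  | zero => exact (star_zero 𝓑(ℓ²(G,H))).symm ▸ zero_mem _
  | add x y _ _ hx hy => exact (star_add x y).symm ▸ add_mem hx hy
  | smul c x _ hx => exact (star_smul c x).symm ▸ Submodule.smul_mem _ _ hx

variable (ι) in
/-- The reduced crossed product as a C*-subalgebra of `B(ℓ²(G,H))`; its carrier is
`CrossedSet ι α`. -/
def crossedProduct (hα : IsAction α) : NonUnitalStarSubalgebra ℂ 𝓑(ℓ²(G,H)) :=
  NonUnitalStarSubalgebra.topologicalClosure
    { crossedSpan ι α with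
      mul_mem' := hα.mul_mem_crossedSpan
      star_mem' := hα.star_mem_crossedSpan }

theorem piRep_mul_lam_mem_crossedSet (a : A) (t : G) : piRep ι α a * lam t ∈ CrossedSet ι α :=
  subset_closure (piRep_mul_lam_mem_crossedSpan a t)

theorem CPOnCrossed.exists_bound (hα : IsAction α) {Φ : 𝓑(ℓ²(G,H)) →ₗ[ℂ] 𝓑(ℓ²(G,H))}
    (hΦ : CPOnCrossed ι α Φ) : ∃ C : ℝ, 0 ≤ C ∧ ∀ x ∈ CrossedSet ι α, ‖Φ x‖ ≤ C * ‖x‖ := by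
  have : IsClosed (crossedProduct ι hα : Set 𝓑(ℓ²(G,H))) := isClosed_closure
  let Ψ : crossedProduct ι hα →ₗ[ℂ] 𝓑(ℓ²(G,H)) :=
    { toFun x := Φ x, map_add' x y := Φ.map_add x y, map_smul' c x := Φ.map_smul c x }
  have hΨ (y : crossedProduct ι hα) : ∃ d, Ψ (star y * y) = star d * d := by
    have hpos : MatPos (Matrix.of fun _ _ : Fin 1 => star (y : 𝓑(ℓ²(G,H))) * y) :=
      matPos_unique_iff.2 ⟨y, rfl⟩
    exact matPos_unique_iff.1 (hΦ.2 1 _ (fun _ _ => (star y * y).2) hpos)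
  obtain ⟨C, hC₀, hC⟩ := exists_bound_of_map_star_mul_self Ψ hΨ
  exact ⟨C, hC₀, fun x hx => hC ⟨x, hx⟩⟩

theorem IsAction.continuousOn_crossedSet (hα : IsAction α)
    {Φ : 𝓑(ℓ²(G,H)) →ₗ[ℂ] 𝓑(ℓ²(G,H))} {C : ℝ} (hC₀ : 0 ≤ C)
    (hC : ∀ x ∈ CrossedSet ι α, ‖Φ x‖ ≤ C * ‖x‖) : ContinuousOn Φ (CrossedSet ι α) := by
  refine (LipschitzOnWith.of_dist_le_mul (K := ⟨C, hC₀⟩) fun x hx y hy => ?_).continuousOn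
  rw [dist_eq_norm, dist_eq_norm, ← map_sub]
  exact hC _ ((crossedProduct ι hα).sub_mem hx hy)

theorem mk_mem_of_continuousOn_crossedSet {Φ : 𝓑(ℓ²(G,H)) →ₗ[ℂ] 𝓑(ℓ²(G,H))}
    (hΦ : ContinuousOn Φ (CrossedSet ι α)) {W : Submodule ℂ (𝓑(ℓ²(G,H)) × 𝓑(ℓ²(G,H)))}
    (hW : IsClosed (W : Set (𝓑(ℓ²(G,H)) × 𝓑(ℓ²(G,H)))))
    (hgen : ∀ a t, (piRep ι α a * lam t, Φ (piRep ι α a * lam t)) ∈ W)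
    {x : 𝓑(ℓ²(G,H))} (hx : x ∈ CrossedSet ι α) : (x, Φ x) ∈ W := by
  have hspan : Set.MapsTo (fun x => (x, Φ x)) (crossedSpan ι α) W :=
    crossedSpan_le (W := W.comap (LinearMap.id.prod Φ)) hgen
  have hclosure := hspan.closure_of_continuousOn (continuousOn_id.prodMk hΦ)
  rw [hW.closure_eq] at hclosure
  exact hclosure hx

end CrossedProduct

section HerzSchur

variable {H : Type*} [NormedAddCommGroup H] [InnerProductSpace ℂ H] [CompleteSpace H]
variable {A : Type*} [NonUnitalCStarAlgebra A] {G : Type*} [Group G]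
variable {ι : A →⋆ₙₐ[ℂ] 𝓑(H)} {α : G → A ≃⋆ₐ[ℂ] A} {F : G → (A →ₗ[ℂ] A)}

theorem NF_apply (s t : G) (a : A) : NF α F s t a = α s⁻¹ (F (s * t⁻¹) (α s a)) := rfl

theorem IsAction.NF_one_one (hα : IsAction α) : NF α F 1 1 = F 1 := by
  ext a
  rw [NF_apply, inv_one, mul_one, hα.1, hα.1]

theorem norm_NF_self_le {C : ℝ} (hC : ∀ a, ‖F 1 a‖ ≤ C * ‖a‖) (s : G) (a : A) :
    ‖NF α F s s a‖ ≤ C * ‖a‖ := by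
  rw [NF_apply, mul_inv_cancel, StarAlgEquiv.norm_map, ← StarAlgEquiv.norm_map (α s) a]
  exact hC _

variable (ι α) in
theorem entry_piRep_mul_lam (a : A) (t s r : G) (v : H) :
    entry s r (piRep ι α a * lam t) v = ι (α s⁻¹ a) (lpEval (t⁻¹ * s) (lpSingle r v)) := rfl

theorem entry_piRep_mul_lam_of_eq {t s r : G} (h : t⁻¹ * s = r) (a : A) :
    entry s r (piRep ι α a * lam t) = ι (α s⁻¹ a) := by
  ext v
  rw [entry_piRep_mul_lam, h, lpEval_lpSingle_self]

theorem entry_piRep_mul_lam_of_ne {t s r : G} (h : t⁻¹ * s ≠ r) (a : A) :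
    entry s r (piRep ι α a * lam t) = 0 := by
  ext v
  rw [entry_piRep_mul_lam, lpEval_lpSingle_of_ne h, map_zero, _root_.zero_apply]

variable (ι F) in
theorem IsAction.piRep_mul_lam_mem_schurGraph (hα : IsAction α) (a : A) (t : G) :
    (piRep ι α a * lam t, piRep ι α (F t a) * lam t) ∈ schurGraph ι (NF α F) := by
  refine mem_schurGraph.2 fun s r => ?_
  by_cases hr : t⁻¹ * s = r
  · have ht : s * r⁻¹ = t := by rw [← hr]; group
    refine ⟨α s⁻¹ a, entry_piRep_mul_lam_of_eq hr a, ?_⟩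
    rw [entry_piRep_mul_lam_of_eq hr, NF_apply, hα.apply_inv_apply, ht]
  · refine ⟨0, ?_, ?_⟩
    · rw [entry_piRep_mul_lam_of_ne hr, map_zero]
    · rw [entry_piRep_mul_lam_of_ne hr, map_zero, map_zero]

end HerzSchur

section Corners

variable {H : Type*} [NormedAddCommGroup H] [InnerProductSpace ℂ H]
variable {X : Type*} {ν : Type*} [Fintype ν]

theorem inner_lpSingle_right (s : X) (v : H) (f : ℓ²(X,H)) :
    ⟪f, lpSingle s v⟫_ℂ = ⟪lpEval s f, v⟫_ℂ := by
  rw [← inner_conj_symm, inner_lpSingle_left, inner_conj_symm]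

theorem norm_toLp_lpSingle (x : ν → X) (v : ν → H) :
    ‖WithLp.toLp 2 fun i => lpSingle (x i) (v i)‖ = ‖WithLp.toLp 2 v‖ := by
  classical
  have hsingle (s : X) (w : H) : ‖lpSingle s w‖ = ‖w‖ :=
    lp.norm_single (E := fun _ : X => H) (p := 2) (by norm_num) s w
  rw [PiLp.norm_eq_of_L2, PiLp.norm_eq_of_L2]
  simp only [hsingle]

theorem norm_toLp_lpEval_le (x : ν → X) (ξ : ν → ℓ²(X,H)) :
    ‖WithLp.toLp 2 fun i => lpEval (x i) (ξ i)‖ ≤ ‖WithLp.toLp 2 ξ‖ := by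
  rw [PiLp.norm_eq_of_L2, PiLp.norm_eq_of_L2]
  gcongr with i
  exact lp.norm_apply_le_norm (by norm_num) (ξ i) (x i)

theorem matForm_entry (x : ν → X) (M : Matrix ν ν 𝓑(ℓ²(X,H))) (v w : ν → H) :
    matForm (Matrix.of fun i j => entry (x i) (x j) (M i j)) v w =
      matForm M (fun i => lpSingle (x i) (v i)) fun i => lpSingle (x i) (w i) := by
  simp only [matForm, Matrix.of_apply, entry_apply, inner_lpSingle_left]

theorem matForm_elemOp (x : ν → X) (T : Matrix ν ν 𝓑(H)) (ξ η : ν → ℓ²(X,H)) :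
    matForm (Matrix.of fun i j => elemOp (x i) (x j) (T i j)) ξ η =
      matForm T (fun i => lpEval (x i) (ξ i)) fun i => lpEval (x i) (η i) := by
  simp only [matForm, Matrix.of_apply, elemOp, ContinuousLinearMap.comp_apply,
    inner_lpSingle_right]

theorem norm_matOp_elemOp (x : ν → X) (T : Matrix ν ν 𝓑(H)) :
    ‖matOp (Matrix.of fun i j => elemOp (x i) (x j) (T i j))‖ = ‖matOp T‖ := by
  refine le_antisymm ?_ ?_
  · exact norm_matOp_le_of_matForm_eq _ (norm_toLp_lpEval_le x) (matForm_elemOp x T)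
  · refine norm_matOp_le_of_matForm_eq _ (fun v => (norm_toLp_lpSingle x v).le) fun v w => ?_
    rw [matForm_elemOp]
    simp only [lpEval_lpSingle_self]

variable [CompleteSpace H]

theorem MatPos.entry {M : Matrix ν ν 𝓑(ℓ²(X,H))} (hM : MatPos M) (x : ν → X) :
    MatPos (Matrix.of fun i j => entry (x i) (x j) (M i j)) :=
  matPos_iff_forall_matForm_nonneg.2 fun v => by
    rw [matForm_entry]
    exact matPos_iff_forall_matForm_nonneg.1 hM _

theorem MatPos.elemOp {T : Matrix ν ν 𝓑(H)} (hT : MatPos T) (x : ν → X) :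
    MatPos (Matrix.of fun i j => elemOp (x i) (x j) (T i j)) :=
  matPos_iff_forall_matForm_nonneg.2 fun ξ => by
    rw [matForm_elemOp]
    exact matPos_iff_forall_matForm_nonneg.1 hT _

end Corners

section SchurMultipliers

variable {H : Type*} [NormedAddCommGroup H] [InnerProductSpace ℂ H]
variable {A : Type*} [NonUnitalCStarAlgebra A] {X : Type*}

theorem TOp_pi_single [DecidableEq (X × X)] (f : X × X → (A →ₗ[ℂ] 𝓑(H))) (p : X × X) (a : A) :
    TOp (fun q => f q ((Pi.single p a : X × X → A) q)) = elemOp p.1 p.2 (f p a) := by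
  rw [TOp, finsum_eq_single _ p fun q hq => ?_, Pi.single_eq_same]
  rw [Pi.single_eq_of_ne hq, map_zero]
  simp [elemOp]

variable [CompleteSpace H] {ι : A →⋆ₙₐ[ℂ] 𝓑(H)} {φ : X → X → (A →ₗ[ℂ] A)}

theorem TKer_pi_single [DecidableEq (X × X)] (p : X × X) (a : A) :
    TKer ι (Pi.single p a) = elemOp p.1 p.2 (ι a) :=
  TOp_pi_single (fun _ => iotaLin ι) p a

theorem finite_support_pi_single [DecidableEq (X × X)] (p : X × X) (a : A) :
    (Function.support (Pi.single p a : X × X → A)).Finite :=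
  (Set.finite_singleton p).subset Pi.support_single_subset

theorem SchurCP.positiveTypeA (hι : Function.Injective ι)
    (h : SchurCP ι fun s t => iotaLin ι ∘ₗ φ s t) : PositiveTypeA φ := by
  classical
  intro m x a ha
  have hk := h m (fun i j => Pi.single (x i, x j) (a i j))
    (fun i j => finite_support_pi_single _ _)
  simp only [TKer_pi_single, TOp_pi_single fun p => iotaLin ι ∘ₗ φ p.1 p.2] at hk
  have hpos := (hk (((matPos_map_iff ι hι).2 ha).elemOp x)).entry x
  simp only [Matrix.of_apply, entry_elemOp_self] at hpos
  exact (matPos_map_iff ι hι).1 hpos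

theorem SchurBound.cbBound {C : ℝ} (h : SchurBound ι (fun s t => iotaLin ι ∘ₗ φ s t) C) (s : X) :
    CBBound ι ι (φ s s) C := by
  classical
  intro n M
  have hk := h n (fun i j => Pi.single (s, s) (M i j)) (fun i j => finite_support_pi_single _ _)
  simp only [TKer_pi_single, TOp_pi_single fun p => iotaLin ι ∘ₗ φ p.1 p.2] at hk
  have hdomain := norm_matOp_elemOp (fun _ : Fin n => s) (M.map ι)
  have himage := norm_matOp_elemOp (fun _ : Fin n => s) (M.map fun a => ι (φ s s a))
  exact himage ▸ hdomain ▸ hk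

theorem PositiveTypeA.schurBound (hφ : PositiveTypeA φ) (hι : Function.Injective ι) {C : ℝ}
    (hC : ∀ s a, ‖φ s s a‖ ≤ C * ‖a‖) (hC₀ : 0 ≤ C) :
    SchurBound ι (fun s t => iotaLin ι ∘ₗ φ s t) C := fun _ _ hk =>
  hφ.norm_matOp_le_of_mem_schurGraph hι hC hC₀ fun i j => TKer_mem_schurGraph (hk i j)

theorem PositiveTypeA.schurCP (hφ : PositiveTypeA φ) (hι : Function.Injective ι) :
    SchurCP ι fun s t => iotaLin ι ∘ₗ φ s t := fun _ _ hk hpos =>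
  hφ.matPos_of_mem_schurGraph hι (fun i j => TKer_mem_schurGraph (hk i j)) hpos

theorem PositiveTypeA.norm_le_of_mem_schurGraph (hφ : PositiveTypeA φ)
    (hι : Function.Injective ι) {C : ℝ} (hC : ∀ s a, ‖φ s s a‖ ≤ C * ‖a‖) (hC₀ : 0 ≤ C)
    {x y : 𝓑(ℓ²(X,H))} (h : (x, y) ∈ schurGraph ι φ) : ‖y‖ ≤ C * ‖x‖ := by
  have hmat := hφ.norm_matOp_le_of_mem_schurGraph hι hC hC₀ (M := Matrix.of fun _ _ : Fin 1 => x)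
    (Y := Matrix.of fun _ _ => y) fun _ _ => h
  simpa only [norm_matOp_unique, Matrix.of_apply] using hmat

end SchurMultipliers

section BoundedRelations

theorem exists_linearMap_of_forall_fst_eq_zero {𝕜 E E' : Type*} [DivisionRing 𝕜]
    [AddCommGroup E] [Module 𝕜 E] [AddCommGroup E'] [Module 𝕜 E'] {g : Submodule 𝕜 (E × E')}
    (hg : ∀ z ∈ g, z.1 = 0 → z.2 = 0) : ∃ Φ : E →ₗ[𝕜] E', ∀ x y, (x, y) ∈ g → Φ x = y := by
  obtain ⟨Φ, hΦ⟩ := LinearMap.exists_extend g.toLinearPMap.toFun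
  refine ⟨Φ, fun x y hxy => ?_⟩
  have hx : x ∈ g.toLinearPMap.domain := ⟨(x, y), hxy, rfl⟩
  have hgraph := Submodule.mem_graph_toLinearPMap hg ⟨x, hx⟩
  calc Φ x = g.toLinearPMap ⟨x, hx⟩ := congrArg (fun f => f ⟨x, hx⟩) hΦ
    _ = y := sub_eq_zero.1 (hg _ (g.sub_mem hgraph hxy) (sub_self _))

theorem isClosed_map_fst_of_norm_snd_le {𝕜 E E' : Type*} [NontriviallyNormedField 𝕜]
    [NormedAddCommGroup E] [NormedSpace 𝕜 E] [CompleteSpace E]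
    [NormedAddCommGroup E'] [NormedSpace 𝕜 E'] [CompleteSpace E']
    {g : Submodule 𝕜 (E × E')} (hg : IsClosed (g : Set (E × E'))) {C : ℝ}
    (hC : ∀ z ∈ g, ‖z.2‖ ≤ C * ‖z.1‖) :
    IsClosed (g.map (LinearMap.fst 𝕜 E E') : Set E) := by
  have : CompleteSpace g := hg.completeSpace_coe
  let f : g →L[𝕜] E := ContinuousLinearMap.fst 𝕜 E E' ∘L g.subtypeL
  have hf : AntilipschitzWith (max 1 C).toNNReal f := by
    refine AddMonoidHomClass.antilipschitz_of_bound _ fun z => ?_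
    rw [Real.coe_toNNReal _ (by positivity)]
    refine max_le ?_ ((hC z z.2).trans ?_)
    · exact le_mul_of_one_le_left (norm_nonneg _) (le_max_left 1 C)
    · exact mul_le_mul_of_nonneg_right (le_max_right 1 C) (norm_nonneg _)
  have hrange : Set.range f = g.map (LinearMap.fst 𝕜 E E') := by
    ext x
    simp [f]
  exact hrange ▸ hf.isClosed_range f.uniformContinuous

end BoundedRelations

section HerzSchurMultipliers

variable {H : Type*} [NormedAddCommGroup H] [InnerProductSpace ℂ H] [CompleteSpace H]
variable {A : Type*} [NonUnitalCStarAlgebra A] {G : Type*} [Group G]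
variable {ι : A →⋆ₙₐ[ℂ] 𝓑(H)} {α : G → A ≃⋆ₐ[ℂ] A} {F : G → (A →ₗ[ℂ] A)}
variable {Φ : 𝓑(ℓ²(G,H)) →ₗ[ℂ] 𝓑(ℓ²(G,H))} {C : ℝ}

theorem PositiveTypeA.exists_norm_NF_self_le (hφ : PositiveTypeA (NF α F)) (hα : IsAction α) :
    ∃ C : ℝ, 0 ≤ C ∧ ∀ s a, ‖NF α F s s a‖ ≤ C * ‖a‖ := by
  let f : A →L[ℂ] A := ⟨F 1, hα.NF_one_one (F := F) ▸ hφ.continuous 1 1⟩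
  exact ⟨‖f‖, norm_nonneg f, norm_NF_self_le f.le_opNorm⟩

theorem PositiveTypeA.exists_HSGenProp (hφ : PositiveTypeA (NF α F)) (hι : Function.Injective ι)
    (hα : IsAction α) : ∃ Φ, HSGenProp ι α F Φ ∧
      ∀ x ∈ CrossedSet ι α, (x, Φ x) ∈ schurGraph ι (NF α F) := by
  obtain ⟨C, hC₀, hC⟩ := hφ.exists_norm_NF_self_le hα
  have hbound (z) (hz : z ∈ schurGraph ι (NF α F)) : ‖z.2‖ ≤ C * ‖z.1‖ :=
    hφ.norm_le_of_mem_schurGraph hι hC hC₀ hz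
  obtain ⟨Φ, hΦ⟩ := exists_linearMap_of_forall_fst_eq_zero fun z hz hz₀ =>
    norm_le_zero_iff.1 ((hbound z hz).trans_eq (by rw [hz₀, norm_zero, mul_zero]))
  have hgen := hα.piRep_mul_lam_mem_schurGraph ι F
  have hdomain : CrossedSet ι α ⊆ (schurGraph ι (NF α F)).map (LinearMap.fst ℂ _ _) :=
    closure_minimal (crossedSpan_le fun a t => ⟨_, hgen a t, rfl⟩)
      (isClosed_map_fst_of_norm_snd_le (isClosed_schurGraph hι hφ.continuous) hbound)
  refine ⟨Φ, fun a t => hΦ _ _ (hgen a t), fun x hx => ?_⟩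
  obtain ⟨⟨x, y⟩, hxy, rfl⟩ := hdomain hx
  exact (hΦ x y hxy).symm ▸ hxy

theorem HSGenProp.mem_crossedSet (hΦ : HSGenProp ι α F Φ)
    (hcont : ContinuousOn Φ (CrossedSet ι α)) {x : 𝓑(ℓ²(G,H))} (hx : x ∈ CrossedSet ι α) :
    Φ x ∈ CrossedSet ι α := by
  have hspan : Set.MapsTo Φ (crossedSpan ι α) (crossedSpan ι α) :=
    crossedSpan_le (W := (crossedSpan ι α).comap Φ) fun a t =>
      Submodule.mem_comap.2 (hΦ a t ▸ piRep_mul_lam_mem_crossedSpan _ _)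
  exact hspan.closure_of_continuousOn hcont hx

theorem HSGenProp.mk_mem_schurGraph (hΦ : HSGenProp ι α F Φ) (hι : Function.Injective ι)
    (hα : IsAction α) (hφ : PositiveTypeA (NF α F)) (hcont : ContinuousOn Φ (CrossedSet ι α)) :
    ∀ x ∈ CrossedSet ι α, (x, Φ x) ∈ schurGraph ι (NF α F) := fun _ hx =>
  mk_mem_of_continuousOn_crossedSet hcont (isClosed_schurGraph hι hφ.continuous)
    (fun a t => (hΦ a t).symm ▸ hα.piRep_mul_lam_mem_schurGraph ι F a t) hx

theorem PositiveTypeA.cbBoundOnCrossed (hφ : PositiveTypeA (NF α F)) (hι : Function.Injective ι)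
    (hC : ∀ s a, ‖NF α F s s a‖ ≤ C * ‖a‖) (hC₀ : 0 ≤ C)
    (hΦ : ∀ x ∈ CrossedSet ι α, (x, Φ x) ∈ schurGraph ι (NF α F)) :
    CBBoundOnCrossed ι α Φ C := fun _ _ hM =>
  hφ.norm_matOp_le_of_mem_schurGraph hι hC hC₀ fun i j => hΦ _ (hM i j)

theorem PositiveTypeA.isHerzSchurMultiplierCP (hφ : PositiveTypeA (NF α F))
    (hι : Function.Injective ι) (hα : IsAction α) : IsHerzSchurMultiplierCP ι α F := by
  obtain ⟨C, hC₀, hC⟩ := hφ.exists_norm_NF_self_le hα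
  obtain ⟨Φ, hgen, hΦ⟩ := hφ.exists_HSGenProp hι hα
  have hcont : ContinuousOn Φ (CrossedSet ι α) := hα.continuousOn_crossedSet hC₀ fun x hx =>
    hφ.norm_le_of_mem_schurGraph hι hC hC₀ (hΦ x hx)
  refine ⟨Φ, hgen, ⟨fun x hx => hgen.mem_crossedSet hcont hx, fun n M hM hpos => ?_⟩,
    C, hC₀, hφ.cbBoundOnCrossed hι hC hC₀ hΦ⟩
  exact hφ.matPos_of_mem_schurGraph hι (fun i j => hΦ _ (hM i j)) hpos

theorem IsAction.matPos_piRep_mul_lam (hα : IsAction α) {ν : Type*} [Fintype ν]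
    (hι : Function.Injective ι) {a : Matrix ν ν A} (ha : MatPos a) (x : ν → G) :
    MatPos (Matrix.of fun p q => piRep ι α (α (x p) (a p q)) * lam (x p * (x q)⁻¹)) := by
  have hconj (p q : ν) : piRep ι α (α (x p) (a p q)) * lam (x p * (x q)⁻¹) =
      lam (x p) * (piRep ι α (a p q) * lam (x q)⁻¹) := by
    rw [← mul_assoc, hα.lam_mul_piRep, mul_assoc, lam_mul_lam]
  have hπ := matPos_iff_forall_matForm_nonneg.1 <|
    (matPos_map_iff (piHom ι α) (piHom_injective hι)).2 ha
  refine matPos_iff_forall_matForm_nonneg.2 fun ξ => ?_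
  simpa only [matForm, Matrix.of_apply, Matrix.map_apply, piHom_apply, hconj, mul_apply_eq_comp,
    inner_lam_right] using hπ fun p => lam (x p)⁻¹ (ξ p)

theorem CPOnCrossed.positiveTypeA_NF (hcp : CPOnCrossed ι α Φ) (hι : Function.Injective ι)
    (hα : IsAction α) (hΦ : HSGenProp ι α F Φ) : PositiveTypeA (NF α F) := by
  intro m x a ha
  have hpos := (hcp.2 m _ (fun _ _ => piRep_mul_lam_mem_crossedSet _ _)
    (hα.matPos_piRep_mul_lam hι ha x)).entry x
  have hentry (p q : Fin m) : entry (x p) (x q)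
      (Φ (piRep ι α (α (x p) (a p q)) * lam (x p * (x q)⁻¹))) =
        ι (NF α F (x p) (x q) (a p q)) := by
    rw [hΦ, entry_piRep_mul_lam_of_eq (by group)]
    rfl
  exact (matPos_map_iff ι hι).1 <| (congrArg MatPos (Matrix.ext hentry)).mp hpos

theorem CBBound.norm_apply_le {f : A →ₗ[ℂ] A} (h : CBBound ι ι f C) (hι : Function.Injective ι)
    (a : A) : ‖f a‖ ≤ C * ‖a‖ := by
  have hmat := h 1 (Matrix.of fun _ _ => a)
  simpa only [norm_matOp_unique, Matrix.map_apply, Matrix.of_apply,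
    NonUnitalStarAlgHom.norm_map ι hι] using hmat

theorem CBBoundOnCrossed.cbBound (h : CBBoundOnCrossed ι α Φ C) (hι : Function.Injective ι)
    (hΦ : HSGenProp ι α F Φ) : CBBound ι ι (F 1) C := by
  intro n M
  have hmem (a : A) : piHom ι α a ∈ CrossedSet ι α := by
    simpa only [piHom_apply, lam_one, mul_one] using
      piRep_mul_lam_mem_crossedSet (ι := ι) (α := α) a 1
  have hmap (a : A) : Φ (piHom ι α a) = piHom ι α (F 1 a) := by
    simpa only [piHom_apply, lam_one, mul_one] using hΦ a 1
  have hπ := h n (M.map (piHom ι α)) fun i j => hmem _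
  have himage : (M.map (piHom ι α)).map Φ = (M.map (F 1)).map (piHom ι α) :=
    Matrix.ext fun i j => hmap _
  rwa [himage, ← norm_matOp_map_eq ι _ hι (piHom_injective hι),
    ← norm_matOp_map_eq ι _ hι (piHom_injective hι)] at hπ

theorem PositiveTypeA.schurBound_NF_iff (hφ : PositiveTypeA (NF α F)) (hι : Function.Injective ι)
    (hα : IsAction α) (hC₀ : 0 ≤ C) :
    SchurBound ι (fun s t => iotaLin ι ∘ₗ NF α F s t) C ↔ CBBound ι ι (F 1) C :=
  ⟨fun h => hα.NF_one_one (F := F) ▸ h.cbBound 1,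
    fun h => hφ.schurBound hι (norm_NF_self_le (h.norm_apply_le hι)) hC₀⟩

theorem CPOnCrossed.cbBoundOnCrossed_iff (hcp : CPOnCrossed ι α Φ) (hι : Function.Injective ι)
    (hα : IsAction α) (hΦ : HSGenProp ι α F Φ) (hC₀ : 0 ≤ C) :
    CBBoundOnCrossed ι α Φ C ↔ CBBound ι ι (F 1) C := by
  refine ⟨fun h => h.cbBound hι hΦ, fun h => ?_⟩
  have hφ := hcp.positiveTypeA_NF hι hα hΦ
  obtain ⟨K, hK₀, hK⟩ := hcp.exists_bound hα
  exact hφ.cbBoundOnCrossed hι (norm_NF_self_le (h.norm_apply_le hι)) hC₀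
    (hΦ.mk_mem_schurGraph hι hα hφ (hα.continuousOn_crossedSet hK₀ hK))

theorem herzSchurCP_tfae_general (hι : Function.Injective ι) (hα : IsAction α) :
    (IsHerzSchurMultiplierCP ι α F ↔ PositiveTypeA (NF α F)) ∧
    (PositiveTypeA (NF α F) ↔
      (IsSchurMultiplier ι (fun s t : G => iotaLin ι ∘ₗ NF α F s t) ∧
        SchurCP ι (fun s t : G => iotaLin ι ∘ₗ NF α F s t))) ∧
    ∀ Φ, HSGenProp ι α F Φ → CPOnCrossed ι α Φ →
      cbNormOnCrossed ι α Φ = cbNorm ι ι (F 1) ∧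
      schurNorm ι (fun s t : G => iotaLin ι ∘ₗ NF α F s t) = cbNorm ι ι (F 1) := by
  refine ⟨⟨fun ⟨Φ, hΦ, hcp, _⟩ => hcp.positiveTypeA_NF hι hα hΦ,
    fun hφ => hφ.isHerzSchurMultiplierCP hι hα⟩,
    ⟨fun hφ => ⟨?_, hφ.schurCP hι⟩, fun h => h.2.positiveTypeA hι⟩,
    fun Φ hΦ hcp => ⟨?_, ?_⟩⟩
  · obtain ⟨C, hC₀, hC⟩ := hφ.exists_norm_NF_self_le hα
    exact ⟨C, hC₀, hφ.schurBound hι hC hC₀⟩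
  · exact congrArg sInf <| Set.ext fun D => and_congr_right fun hD =>
      hcp.cbBoundOnCrossed_iff hι hα hΦ hD
  · exact congrArg sInf <| Set.ext fun D => and_congr_right fun hD =>
      (hcp.positiveTypeA_NF hι hα hΦ).schurBound_NF_iff hι hα hD

end HerzSchurMultipliers

end

/-- **Theorem 2.8.** Let `(A,G,α)` be a C*-dynamical system with `G` discrete and
`F : G → CB(A)` a bounded function.  The following are equivalent: (i) `F` is a
completely positive Herz-Schur `(A,G,α)`-multiplier; (ii) `N(F)` is of positive type;
(iii) `N(F)` is a Schur `A`-multiplier and `S_{N(F)}` is completely positive.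
Moreover, if (i) holds then `‖S_F‖_cb = ‖S_{N(F)}‖_cb = ‖F(e)‖_cb`. -/
theorem herzSchurCP_tfae
    {H : Type*} [NormedAddCommGroup H] [InnerProductSpace ℂ H] [CompleteSpace H]
    {A : Type*} [NonUnitalCStarAlgebra A] {G : Type*} [Group G]
    (ι : A →⋆ₙₐ[ℂ] (H →L[ℂ] H)) (hisom : ∀ a : A, ‖ι a‖ = ‖a‖)
    (hnd : NondegenerateRep ι)
    (α : G → A ≃⋆ₐ[ℂ] A) (hα : IsAction α)
    (F : G → (A →ₗ[ℂ] A))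
    (hbdd : ∃ C : ℝ, 0 ≤ C ∧ ∀ s : G, CBBound (fun a => ι a) (fun a => ι a) (F s) C) :
    (IsHerzSchurMultiplierCP ι α F ↔ PositiveTypeA (NF α F)) ∧
    (PositiveTypeA (NF α F) ↔
      (IsSchurMultiplier ι (fun s t : G => iotaLin ι ∘ₗ NF α F s t) ∧
        SchurCP ι (fun s t : G => iotaLin ι ∘ₗ NF α F s t))) ∧
    (IsHerzSchurMultiplierCP ι α F →
      ∀ Φ, HSGenProp ι α F Φ → CPOnCrossed ι α Φ →
        cbNormOnCrossed ι α Φ = cbNorm (fun a => ι a) (fun a => ι a) (F 1) ∧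
        schurNorm ι (fun s t : G => iotaLin ι ∘ₗ NF α F s t)
          = cbNorm (fun a => ι a) (fun a => ι a) (F 1)) := by
  have hι : Function.Injective ι := (AddMonoidHomClass.isometry_of_norm ι hisom).injective
  obtain ⟨hHS, hSchur, hnorm⟩ := herzSchurCP_tfae_general (F := F) hι hα
  exact ⟨hHS, hSchur, fun _ => hnorm⟩

end
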